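/- Let M = p_i^{n_i} p_j^2 p_k^2 with p_i, p_j, p_k distinct primes, n_i ≥ 2, and p_k < p_j. Assume A ⊕ B = ℤ_M, |A| = p_i p_j p_k, Φ_M | A, and that there exist a D(M)-grid Λ and a, a_i ∈ A ∩ Λ with (a − a_i, M) = M/p_i witnessing a p_i extended corner (i.e., A ∩ Λ(a, M/(p_j p_k)) is M-fibered in the p_j direction but not in the p_k direction, and A ∩ Λ(a_i, M/(p_j p_k)) is M-fibered in the p_k direction but not in the p_j direction). Assume moreover that Φ_{M/p_j} | B and that no element a′ ∈ A satisfies (a′ − a, M) = M/(p_j p_k) or (a′ − a_i, M) = M/(p_j p_k). Then Φ_{M/p_k} | B. -/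

import Mathlib

open Polynomial

/-- The mask polynomial `A(X) = Σ_{a ∈ A} X^a` of a finite subset of `ZMod M`,
using the representatives in `{0, …, M-1}`. -/
noncomputable def maskPoly (M : ℕ) (A : Finset (ZMod M)) : Polynomial ℤ :=
  ∑ a ∈ A, X ^ a.val

/-- `Φ_s | A` : the `s`-th cyclotomic polynomial divides the mask polynomial of `A` in `ℤ[X]`. -/
def cycDvd (M s : ℕ) (A : Finset (ZMod M)) : Prop :=
  cyclotomic s ℤ ∣ maskPoly M A

/-- `A ⊕ B = ℤ_M` : every element of `ℤ_M` has a unique representation `a + b`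
with `a ∈ A` and `b ∈ B`. -/
def IsTiling (M : ℕ) (A B : Set (ZMod M)) : Prop :=
  ∀ z : ZMod M, ∃! ab : ZMod M × ZMod M, ab.1 ∈ A ∧ ab.2 ∈ B ∧ ab.1 + ab.2 = z

/-- The Coven–Meyerowitz property (T2): whenever `s_1, …, s_m` are prime powers dividing `M`,
powers of pairwise distinct primes, with `Φ_{s_t} | A` for each `t`, then `Φ_{s_1 ⋯ s_m} | A`. -/
def SatisfiesT2 (M : ℕ) (A : Finset (ZMod M)) : Prop :=
  ∀ (P : Finset ℕ) (e : ℕ → ℕ), P.Nonempty →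
    (∀ p ∈ P, p.Prime ∧ 1 ≤ e p ∧ p ^ e p ∣ M ∧ cycDvd M (p ^ e p) A) →
    cycDvd M (∏ p ∈ P, p ^ e p) A

/-- The `D`-grid through `x` in `ZMod M` : `Λ(x, D) = {y : D ∣ y - x}`. -/
def gridSet (M : ℕ) (x : ZMod M) (D : ℕ) : Set (ZMod M) :=
  {y : ZMod M | (D : ZMod M) ∣ (y - x)}

/-- `S` is fibered in the `p` direction on scale `M`: every element of `S` has its whole
fiber `Λ(s, M/p)` contained in `S`. -/
def Fibered (M p : ℕ) (S : Set (ZMod M)) : Prop :=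
  ∀ s ∈ S, gridSet M s (M / p) ⊆ S

/-- `Div_N(S)` : the set of values `(s - s', N) = gcd(s - s', N)` for `s, s' ∈ S`. -/
def DivSet (M N : ℕ) (S : Set (ZMod M)) : Set ℕ :=
  {m : ℕ | ∃ s ∈ S, ∃ s' ∈ S, Nat.gcd (s - s').val N = m}


set_option linter.unusedSectionVars false

namespace S18

section Ty
variable {G : Type*} [AddCommGroup G] (F : AddSubgroup G)

/-- Same type (valuation) of two elements, on a group with a three step filtration. -/
def tyJ (x y : G) : Prop :=
  (x = 0 ∧ y = 0) ∨ (x ≠ 0 ∧ y ≠ 0 ∧ x ∈ F ∧ y ∈ F) ∨ (x ∉ F ∧ y ∉ F)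

/-- Same type (valuation) of two elements, only compared at the top when the sum is small. -/
def tyI (x y : G) : Prop :=
  (x = 0 ∧ y = 0) ∨ (x ≠ 0 ∧ y ≠ 0 ∧ x ∈ F ∧ y ∈ F) ∨ (x ∉ F ∧ y ∉ F ∧ x + y ∈ F)

variable {F}

lemma tyJ_zero {x x' y y' : G} (h : x = x') (h' : y = y') : tyJ F (x - x') (y - y') :=
  Or.inl ⟨sub_eq_zero.2 h, sub_eq_zero.2 h'⟩

lemma tyI_zero {x x' y y' : G} (h : x = x') (h' : y = y') : tyI F (x - x') (y - y') :=
  Or.inl ⟨sub_eq_zero.2 h, sub_eq_zero.2 h'⟩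

lemma tyJ_F {x x' y y' : G} (h : x ≠ x') (h' : y ≠ y') (hx : x - x' ∈ F) (hy : y - y' ∈ F) :
    tyJ F (x - x') (y - y') :=
  Or.inr (Or.inl ⟨sub_ne_zero.2 h, sub_ne_zero.2 h', hx, hy⟩)

lemma tyI_F {x x' y y' : G} (h : x ≠ x') (h' : y ≠ y') (hx : x - x' ∈ F) (hy : y - y' ∈ F) :
    tyI F (x - x') (y - y') :=
  Or.inr (Or.inl ⟨sub_ne_zero.2 h, sub_ne_zero.2 h', hx, hy⟩)

lemma tyJ_N {x y : G} (hx : x ∉ F) (hy : y ∉ F) : tyJ F x y :=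
  Or.inr (Or.inr ⟨hx, hy⟩)

lemma tyJ_neg {x y : G} (h : x + y = 0) : tyJ F x y := by
  have : y = -x := (neg_eq_of_add_eq_zero_right h).symm
  subst this
  unfold tyJ
  by_cases h0 : x = 0
  · simp [h0]
  · by_cases h1 : x ∈ F <;> simp [h0, h1]

lemma tyI_neg {x y : G} (h : x + y = 0) : tyI F x y := by
  have : y = -x := (neg_eq_of_add_eq_zero_right h).symm
  subst this
  unfold tyI
  by_cases h0 : x = 0
  · simp [h0]
  · by_cases h1 : x ∈ F <;> simp [h0, h1]

lemma tyJ_left {G : Type*} [AddCommGroup G] {F : AddSubgroup G} {x y : G} (T : tyJ F x y)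
    (hy : y = 0) : x = 0 := by
  subst hy
  rcases T with T | T | T
  · exact T.1
  · exact absurd rfl T.2.1
  · exact absurd F.zero_mem T.2

lemma tyI_left {G : Type*} [AddCommGroup G] {F : AddSubgroup G} {x y : G} (T : tyI F x y)
    (hy : y = 0) : x = 0 := by
  subst hy
  rcases T with T | T | T
  · exact T.1
  · exact absurd rfl T.2.1
  · exact absurd F.zero_mem T.2.1

lemma sub_add_sub_zero {G : Type*} [AddCommGroup G] {x y x' y' : G} (e : x + y = x' + y') :
    (x - x') + (y - y') = 0 := by
  rw [sub_add_sub_comm, e, sub_self]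

/-- Splitting dichotomy in a direction. -/
lemma split_J {x x' y y' : G} (h : (x - x') + (y - y') ∈ F)
    (hn : ¬ tyJ F (x - x') (y - y')) :
    x - x' ∈ F ∧ y - y' ∈ F ∧ (x = x' ∨ y = y') := by
  by_cases hx : x - x' ∈ F
  · have hy : y - y' ∈ F := by simpa using F.sub_mem h hx
    refine ⟨hx, hy, ?_⟩
    by_contra hc
    push Not at hc
    exact hn (tyJ_F hc.1 hc.2 hx hy)
  · have hy : y - y' ∉ F := fun hy => hx (by simpa using F.sub_mem h hy)
    exact absurd (tyJ_N hx hy) hn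

lemma split_I {x x' y y' : G} (h : (x - x') + (y - y') ∈ F)
    (hn : ¬ tyI F (x - x') (y - y')) :
    x - x' ∈ F ∧ y - y' ∈ F ∧ (x = x' ∨ y = y') := by
  by_cases hx : x - x' ∈ F
  · have hy : y - y' ∈ F := by simpa using F.sub_mem h hx
    refine ⟨hx, hy, ?_⟩
    by_contra hc
    push Not at hc
    exact hn (tyI_F hc.1 hc.2 hx hy)
  · have hy : y - y' ∉ F := fun hy => hx (by simpa using F.sub_mem h hy)
    exact absurd (Or.inr (Or.inr ⟨hx, hy, h⟩)) hn

end Ty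

section Comb
variable {I J K : Type*} [AddCommGroup I] [AddCommGroup J] [AddCommGroup K]
  [Fintype I] [Fintype J] [Fintype K]

open Classical in
/-- The number of elements of `S` satisfying `P`, as an integer. -/
noncomputable def cnt (S : Finset (I × J × K)) (P : I × J × K → Prop) : ℤ :=
  ((S.filter P).card : ℤ)

lemma cnt_nonneg (S : Finset (I × J × K)) (P : I × J × K → Prop) : 0 ≤ cnt S P := by
  unfold cnt; positivity

lemma cnt_pos {S : Finset (I × J × K)} {P : I × J × K → Prop} :
    0 < cnt S P ↔ ∃ x ∈ S, P x := by
  classical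
  unfold cnt
  rw [Nat.cast_pos, Finset.card_pos, Finset.filter_nonempty_iff]

lemma cnt_zero {S : Finset (I × J × K)} {P : I × J × K → Prop} (h : ∀ x ∈ S, ¬ P x) :
    cnt S P = 0 := by
  by_contra hc
  have := lt_of_le_of_ne (cnt_nonneg S P) (Ne.symm hc)
  obtain ⟨x, hx, hp⟩ := cnt_pos.1 this
  exact h x hx hp

lemma cnt_le_one {S : Finset (I × J × K)} {P : I × J × K → Prop}
    (h : ∀ x ∈ S, ∀ y ∈ S, P x → P y → x = y) : cnt S P ≤ 1 := by
  classical
  unfold cnt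
  have : (S.filter P).card ≤ 1 := by
    rw [Finset.card_le_one]
    intro x hx y hy
    simp only [Finset.mem_filter] at hx hy
    exact h x hx.1 y hy.1 hx.2 hy.2
  exact_mod_cast this

/-- If `T` injects in the filtered set then it is a lower bound for the count. -/
lemma le_cnt {S : Finset (I × J × K)} {P : I × J × K → Prop} {T : Type*} (s : Finset T)
    (f : T → I × J × K) (hf : Set.InjOn f s) (hS : ∀ t ∈ s, f t ∈ S ∧ P (f t)) :
    (s.card : ℤ) ≤ cnt S P := by
  classical
  unfold cnt
  have : s.card ≤ (S.filter P).card := by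
    apply Finset.card_le_card_of_injOn f _ hf
    intro t ht
    simpa using hS t ht
  exact_mod_cast this

lemma cnt_le {S : Finset (I × J × K)} {P : I × J × K → Prop} {T : Type*} (s : Finset T)
    (f : I × J × K → T) (hf : ∀ x ∈ S, ∀ y ∈ S, P x → P y → f x = f y → x = y)
    (hS : ∀ x ∈ S, P x → f x ∈ s) :
    cnt S P ≤ s.card := by
  classical
  unfold cnt
  have : (S.filter P).card ≤ s.card := by
    apply Finset.card_le_card_of_injOn f
    · intro x hx
      simp only [Finset.coe_filter, Set.mem_ofPred_eq] at hx
      exact hS x hx.1 hx.2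
    · intro x hx y hy hxy
      simp only [Finset.coe_filter, Set.mem_ofPred_eq] at hx hy
      exact hf x hx.1 y hy.1 hx.2 hy.2 hxy
  exact_mod_cast this

/-- All the data of the situation in coordinates (the base point `a` is at the origin). -/
structure Setup (Fi : AddSubgroup I) (Fj : AddSubgroup J) (Fk : AddSubgroup K)
    (A B : Finset (I × J × K)) (s0 : I) (pi pj pk : ℕ) : Prop where
  hpk : pk.Prime
  hpj : pj.Prime
  hkj : pk < pj
  hpi : 2 ≤ pi
  hik : pi ≠ pk
  cFi : Nat.card Fi = pi
  cFj : Nat.card Fj = pj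
  cFk : Nat.card Fk = pk
  cJ : Fintype.card J = pj ^ 2
  cK : Fintype.card K = pk ^ 2
  cA : A.card = pi * pj * pk
  neB : B.Nonempty
  s0F : s0 ∈ Fi
  s0n : s0 ≠ 0
  A0 : ∀ y ∈ Fj, ∀ z ∈ Fk, ((0, y, z) ∈ A ↔ z = 0)
  A1 : ∀ y ∈ Fj, ∀ z ∈ Fk, ((s0, y, z) ∈ A ↔ y = 0)
  cover : ∀ x y z, ∃ x1 y1 z1 x2 y2 z2, (x1, y1, z1) ∈ A ∧ (x2, y2, z2) ∈ B ∧
    x1 + x2 = x ∧ y1 + y2 = y ∧ z1 + z2 = z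
  sands : ∀ {x y z x' y' z' u v w u' v' w'}, (x, y, z) ∈ A → (x', y', z') ∈ A →
    (u, v, w) ∈ B → (u', v', w') ∈ B → tyI Fi (x - x') (u - u') → tyJ Fj (y - y') (v - v') →
    tyJ Fk (z - z') (w - w') → u = u' ∧ v = v' ∧ w = w'
  C1 : ∀ x y z, ∀ s ∈ Fi, ∀ u ∈ Fj, ∀ t,
    ∀ W : I → J → K → ℤ, (∀ x y z, W x y z = cnt A (fun a => a.1 = x ∧ a.2.1 = y ∧ a.2.2 - z ∈ Fk)) →
    W x y z - W (x + s) y z - W x (y + u) z - W x y (z + t) + W (x + s) (y + u) z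
      + W (x + s) y (z + t) + W x (y + u) (z + t) - W (x + s) (y + u) (z + t) = 0
  C2 : ∀ x y z, ∀ s ∈ Fi, ∀ u, ∀ t ∈ Fk,
    ∀ W : I → J → K → ℤ, (∀ x y z, W x y z = cnt B (fun a => a.1 = x ∧ a.2.1 - y ∈ Fj ∧ a.2.2 = z)) →
    W x y z - W (x + s) y z - W x (y + u) z - W x y (z + t) + W (x + s) (y + u) z
      + W (x + s) y (z + t) + W x (y + u) (z + t) - W (x + s) (y + u) (z + t) = 0
  C3 : (∀ x z, ∀ s ∈ Fi, ∀ t ∈ Fk,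
      cnt A (fun a => a.1 = x ∧ a.2.2 = z) - cnt A (fun a => a.1 = x + s ∧ a.2.2 = z)
      - cnt A (fun a => a.1 = x ∧ a.2.2 = z + t)
      + cnt A (fun a => a.1 = x + s ∧ a.2.2 = z + t) = 0) ∨
    (∀ x z, ∀ s ∈ Fi, ∀ t ∈ Fk,
      cnt B (fun a => a.1 = x ∧ a.2.2 = z) - cnt B (fun a => a.1 = x + s ∧ a.2.2 = z)
      - cnt B (fun a => a.1 = x ∧ a.2.2 = z + t)
      + cnt B (fun a => a.1 = x + s ∧ a.2.2 = z + t) = 0)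
  C4 : (∀ x z, ∀ s ∈ Fi, ∀ t,
      cnt A (fun a => a.1 = x ∧ a.2.2 - z ∈ Fk) - cnt A (fun a => a.1 = x + s ∧ a.2.2 - z ∈ Fk)
      - cnt A (fun a => a.1 = x ∧ a.2.2 - (z + t) ∈ Fk)
      + cnt A (fun a => a.1 = x + s ∧ a.2.2 - (z + t) ∈ Fk) = 0) ∨
    (∀ x z, ∀ s ∈ Fi, ∀ t,
      cnt B (fun a => a.1 = x ∧ a.2.2 - z ∈ Fk) - cnt B (fun a => a.1 = x + s ∧ a.2.2 - z ∈ Fk)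
      - cnt B (fun a => a.1 = x ∧ a.2.2 - (z + t) ∈ Fk)
      + cnt B (fun a => a.1 = x + s ∧ a.2.2 - (z + t) ∈ Fk) = 0)
  C5 : (∀ x, ∀ s ∈ Fi, cnt A (fun a => a.1 = x) = cnt A (fun a => a.1 = x + s)) ∨
    (∀ x, ∀ s ∈ Fi, cnt B (fun a => a.1 = x) = cnt B (fun a => a.1 = x + s))

variable {Fi : AddSubgroup I} {Fj : AddSubgroup J} {Fk : AddSubgroup K}
    {A B : Finset (I × J × K)} {s0 : I} {pi pj pk : ℕ}

namespace Setup
variable (h : Setup Fi Fj Fk A B s0 pi pj pk)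
include h

lemma a0 : ((0 : I), (0 : J), (0 : K)) ∈ A := (h.A0 0 Fj.zero_mem 0 Fk.zero_mem).2 rfl
lemma a0y {y : J} (hy : y ∈ Fj) : ((0 : I), y, (0 : K)) ∈ A := (h.A0 y hy 0 Fk.zero_mem).2 rfl
lemma a1z {z : K} (hz : z ∈ Fk) : (s0, (0 : J), z) ∈ A := (h.A1 0 Fj.zero_mem z hz).2 rfl
lemma a1 : (s0, (0 : J), (0 : K)) ∈ A := h.a1z Fk.zero_mem

lemma exj : ∃ y ∈ Fj, ∃ y' ∈ Fj, y ≠ 0 ∧ y' ≠ 0 ∧ y ≠ y' := by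
  classical
  have h3 : 2 < Nat.card Fj := by rw [h.cFj]; have := h.hpk.two_le; have := h.hkj; omega
  rw [Nat.card_eq_fintype_card, ← Finset.card_univ] at h3
  obtain ⟨a, b, ha, hb, hab⟩ : ∃ a b : Fj, a ≠ 0 ∧ b ≠ 0 ∧ a ≠ b := by
    have h1 : 1 < (Finset.univ.erase (0 : Fj)).card := by
      rw [Finset.card_erase_of_mem (Finset.mem_univ _)]; omega
    obtain ⟨a, ha, b, hb, hab⟩ := Finset.one_lt_card.1 h1
    exact ⟨a, b, by simpa using ha, by simpa using hb, hab⟩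
  exact ⟨a, a.2, b, b.2, by simpa using ha, by simpa using hb, fun hh => hab (Subtype.ext hh)⟩

lemma exk : ∃ t ∈ Fk, t ≠ 0 := by
  have h3 : 1 < Nat.card Fk := by rw [h.cFk]; exact h.hpk.one_lt
  obtain ⟨a, ha⟩ := (AddSubgroup.one_lt_card_iff_ne_bot Fk).1 h3 |> (AddSubgroup.bot_or_exists_ne_zero Fk).resolve_left
  exact ⟨a, ha⟩

lemma E1 {u v w u' v' w'} (h1 : (u, v, w) ∈ B) (h2 : (u', v', w') ∈ B) (hi : u - u' ∈ Fi)
    (hj : v - v' ∈ Fj) (hk : w - w' ∈ Fk) :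
    u = u' ∧ (v = v' → w = w') ∧ (w = w' → v = v') := by
  obtain ⟨y, hy, -, -, hy0, -, -⟩ := h.exj
  obtain ⟨t, ht, ht0⟩ := h.exk
  have hu : u = u' := by
    by_contra hu
    have T : tyI Fi (0 - s0) (u - u') := tyI_F (Ne.symm h.s0n) hu (by simpa using h.s0F) hi
    by_cases hv : v = v' <;> by_cases hw : w = w'
    · exact hu (h.sands h.a0 h.a1 h1 h2 T (tyJ_zero rfl hv) (tyJ_zero rfl hw)).1
    · exact hu (h.sands h.a0 (h.a1z ht) h1 h2 T (tyJ_zero rfl hv)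
        (tyJ_F (Ne.symm ht0) hw (by simpa using ht) hk)).1
    · exact hu (h.sands (h.a0y hy) h.a1 h1 h2 T
        (tyJ_F hy0 hv (by simpa using hy) hj) (tyJ_zero rfl hw)).1
    · exact hu (h.sands (h.a0y hy) (h.a1z ht) h1 h2 T
        (tyJ_F hy0 hv (by simpa using hy) hj) (tyJ_F (Ne.symm ht0) hw (by simpa using ht) hk)).1
  refine ⟨hu, fun hv => ?_, fun hw => ?_⟩
  · by_contra hw
    exact hw (h.sands h.a1 (h.a1z ht) h1 h2 (tyI_zero rfl hu) (tyJ_zero rfl hv)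
      (tyJ_F (Ne.symm ht0) hw (by simpa using ht) hk)).2.2
  · by_contra hv
    exact hv (h.sands (h.a0y hy) h.a0 h1 h2 (tyI_zero rfl hu)
      (tyJ_F hy0 hv (by simpa using hy) hj) (tyJ_zero rfl hw)).2.1

/-- the consequence of `Φ_{M/p_k} ∣ A` near the corner -/
lemma key {y : J} (hy : y ∈ Fj) (hy0 : y ≠ 0) (z : K) :
    cnt A (fun a => a.1 = 0 ∧ a.2.1 = y ∧ a.2.2 - z ∈ Fk)
      + cnt A (fun a => a.1 = s0 ∧ a.2.1 = 0 ∧ a.2.2 - z ∈ Fk)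
    = pk + cnt A (fun a => a.1 = 0 ∧ a.2.1 = 0 ∧ a.2.2 - z ∈ Fk)
      + cnt A (fun a => a.1 = s0 ∧ a.2.1 = y ∧ a.2.2 - z ∈ Fk) := by
  classical
  have e := h.C1 0 0 0 s0 h.s0F y hy z _ (fun _ _ _ => rfl)
  simp only [zero_add, sub_zero] at e
  have e1 : ∀ y ∈ Fj, cnt A (fun a => a.1 = 0 ∧ a.2.1 = y ∧ a.2.2 ∈ Fk) = 1 := by
    intro y hy
    apply le_antisymm
    · apply cnt_le_one
      rintro ⟨a, b, c⟩ h1 ⟨a', b', c'⟩ h2 ⟨h3, h4, h5⟩ ⟨h3', h4', h5'⟩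
      simp only at h3 h4 h5 h3' h4' h5'
      subst h3 h4 h3' h4'
      rw [h.A0 _ hy _ h5] at h1
      rw [h.A0 _ hy _ h5'] at h2
      rw [h1, h2]
    · exact cnt_pos.2 ⟨_, h.a0y hy, rfl, rfl, Fk.zero_mem⟩
  have e2 : cnt A (fun a => a.1 = s0 ∧ a.2.1 = y ∧ a.2.2 ∈ Fk) = 0 := by
    apply cnt_zero
    rintro ⟨a, b, c⟩ h1 ⟨h3, h4, h5⟩
    simp only at h3 h4 h5
    subst h3 h4
    exact hy0 ((h.A1 _ hy _ h5).1 h1)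
  have e3 : cnt A (fun a => a.1 = s0 ∧ a.2.1 = 0 ∧ a.2.2 ∈ Fk) = pk := by
    rw [← h.cFk, Nat.card_eq_fintype_card, ← Finset.card_univ]
    apply le_antisymm
    · apply cnt_le (f := fun a => if ha : a.2.2 ∈ Fk then (⟨a.2.2, ha⟩ : Fk) else 0)
      · rintro ⟨a, b, c⟩ h1 ⟨a', b', c'⟩ h2 ⟨h3, h4, h5⟩ ⟨h3', h4', h5'⟩ hh
        simp only at h3 h4 h5 h3' h4' h5'
        subst h3 h4 h3' h4'
        simp only [h5, h5', dif_pos, Subtype.mk.injEq] at hh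
        rw [hh]
      · intros; simp
    · apply le_cnt _ (fun t : Fk => (s0, 0, (t : K)))
      · intro t _ t' _ hh
        simpa using hh
      · intro t _
        exact ⟨h.a1z t.2, rfl, rfl, t.2⟩
  rw [e1 0 Fj.zero_mem, e1 y hy, e2, e3] at e
  linarith

end Setup
end Comb
end S18

namespace S18
section Comb
variable {I J K : Type*} [AddCommGroup I] [AddCommGroup J] [AddCommGroup K]
  [Fintype I] [Fintype J] [Fintype K]
variable {Fi : AddSubgroup I} {Fj : AddSubgroup J} {Fk : AddSubgroup K}
    {A B : Finset (I × J × K)} {s0 : I} {pi pj pk : ℕ}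
namespace Setup
variable (h : Setup Fi Fj Fk A B s0 pi pj pk)
include h

lemma exK : ∃ z : K, z ∉ Fk := by
  by_contra hc
  push Not at hc
  have : Fk = ⊤ := by ext z; simp [hc z]
  have h1 := h.cFk
  rw [this, AddSubgroup.card_top, Nat.card_eq_fintype_card, h.cK] at h1
  have := h.hpk.two_le
  nlinarith

lemma exU : ∃ u u' : J, u ∉ Fj ∧ u' ∉ Fj ∧ u - u' ∉ Fj := by
  classical
  have hc : Nat.card (J ⧸ Fj) = pj := by
    have := AddSubgroup.card_eq_card_quotient_mul_card_addSubgroup Fj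
    rw [h.cFj, Nat.card_eq_fintype_card, h.cJ, pow_two] at this
    exact (Nat.eq_of_mul_eq_mul_right h.hpj.pos this).symm
  have h3 : 2 < Nat.card (J ⧸ Fj) := by
    rw [hc]; have := h.hpk.two_le; have := h.hkj; omega
  rw [Nat.card_eq_fintype_card, ← Finset.card_univ] at h3
  have h1 : 1 < (Finset.univ.erase (0 : J ⧸ Fj)).card := by
    rw [Finset.card_erase_of_mem (Finset.mem_univ _)]; omega
  obtain ⟨a, ha, b, hb, hab⟩ := Finset.one_lt_card.1 h1
  obtain ⟨u, rfl⟩ := QuotientAddGroup.mk_surjective a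
  obtain ⟨u', rfl⟩ := QuotientAddGroup.mk_surjective b
  refine ⟨u, u', ?_, ?_, ?_⟩
  · intro hu; simp [(QuotientAddGroup.eq_zero_iff u).2 hu] at ha
  · intro hu; simp [(QuotientAddGroup.eq_zero_iff u').2 hu] at hb
  · intro hu
    apply hab
    rw [QuotientAddGroup.eq]
    have := Fj.neg_mem hu
    rwa [neg_sub, sub_eq_neg_add] at this

/-- If `B` has a difference of pure type `p_j^2`, `A` does not. -/
lemma E3 (hB : ∃ x v v' w, (x, v, w) ∈ B ∧ (x, v', w) ∈ B ∧ v - v' ∉ Fj) {x y y' z}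
    (h1 : (x, y, z) ∈ A) (h2 : (x, y', z) ∈ A) : y - y' ∈ Fj := by
  by_contra hc
  obtain ⟨u, v, v', w, hb, hb', hv⟩ := hB
  have := (h.sands h1 h2 hb hb' (tyI_zero rfl rfl) (tyJ_N hc hv) (tyJ_zero rfl rfl)).2.1
  apply hv
  rw [this, sub_self]; exact Fj.zero_mem

/-- a count which is at least `pk` is full -/
lemma full {x : I} {y : J} {z : K} (hw : (pk : ℤ) ≤ cnt A (fun a => a.1 = x ∧ a.2.1 = y ∧ a.2.2 - z ∈ Fk)) :
    ∀ t ∈ Fk, (x, y, z + t) ∈ A := by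
  classical
  intro t ht
  by_contra hc
  have : cnt A (fun a => a.1 = x ∧ a.2.1 = y ∧ a.2.2 - z ∈ Fk) ≤
      ((Finset.univ : Finset Fk).erase ⟨t, ht⟩).card := by
    apply cnt_le (f := fun a => if ha : a.2.2 - z ∈ Fk then (⟨a.2.2 - z, ha⟩ : Fk) else 0)
    · rintro ⟨a, b, c⟩ h1 ⟨a', b', c'⟩ h2 ⟨h3, h4, h5⟩ ⟨h3', h4', h5'⟩ hh
      simp only at h3 h4 h5 h3' h4' h5'
      subst h3 h4 h3' h4'
      simp only [h5, h5', dif_pos, Subtype.mk.injEq, sub_left_inj] at hh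
      rw [hh]
    · rintro ⟨a, b, c⟩ h1 ⟨h3, h4, h5⟩
      simp only at h3 h4 h5
      subst h3 h4
      simp only [h5, dif_pos, Finset.mem_erase, ne_eq, Subtype.mk.injEq, Finset.mem_univ, and_true]
      intro h6
      apply hc
      rw [← h6]; simpa using h1
  rw [Finset.card_erase_of_mem (Finset.mem_univ _), Finset.card_univ, ← Nat.card_eq_fintype_card,
    h.cFk] at this
  have h2 := h.hpk.two_le
  have : (pk : ℤ) ≤ ((pk - 1 : ℕ) : ℤ) := hw.trans this
  have : pk ≤ pk - 1 := by exact_mod_cast this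
  omega

section Mixed
variable (hN : ∃ x y k y' k', (x, y, k) ∈ B ∧ (x, y', k') ∈ B ∧ y - y' ∈ Fj ∧ y ≠ y' ∧
  k - k' ∈ Fk ∧ k ≠ k')
include hN

lemma noA {x y z y' z'} (h1 : (x, y, z) ∈ A) (h2 : (x, y', z') ∈ A) (hy : y - y' ∈ Fj)
    (hz : z - z' ∈ Fk) : y = y' ∨ z = z' := by
  by_contra hc
  push Not at hc
  obtain ⟨u, v, w, v', w', hb, hb', g1, g2, g3, g4⟩ := hN
  exact g2 (h.sands h1 h2 hb hb' (tyI_zero rfl rfl) (tyJ_F hc.1 g2 hy g1)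
    (tyJ_F hc.2 g4 hz g3)).2.1

lemma cz (z : K) : ∃ c, (s0, (0 : J), c) ∈ A ∧ c - z ∈ Fk := by
  by_contra hc
  have h0 : cnt A (fun a => a.1 = s0 ∧ a.2.1 = 0 ∧ a.2.2 - z ∈ Fk) = 0 := by
    apply cnt_zero
    rintro ⟨a, b, c⟩ h1 ⟨h3, h4, h5⟩
    simp only at h3 h4 h5
    subst h3 h4
    exact hc ⟨c, h1, h5⟩
  have hf : ∀ y ∈ Fj, y ≠ 0 → ∀ t ∈ Fk, ((0 : I), y, z + t) ∈ A := by
    intro y hy hy0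
    have e := h.key hy hy0 z
    have e1 := cnt_nonneg A (fun a => a.1 = 0 ∧ a.2.1 = 0 ∧ a.2.2 - z ∈ Fk)
    have e2 := cnt_nonneg A (fun a => a.1 = s0 ∧ a.2.1 = y ∧ a.2.2 - z ∈ Fk)
    apply h.full
    linarith
  obtain ⟨y, hy, y', hy', hy0, hy0', hyy⟩ := h.exj
  obtain ⟨t, ht, ht0⟩ := h.exk
  rcases h.noA hN (hf y hy hy0 0 Fk.zero_mem) (hf y' hy' hy0' t ht) (Fj.sub_mem hy hy')
    (by simpa using ht) with e | e
  · exact hyy e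
  · exact ht0 (by simpa using e.symm)

lemma E2 {u v w u' v' w'} (h1 : (u, v, w) ∈ B) (h2 : (u', v', w') ∈ B) (hi : u - u' ∈ Fi)
    (hj : v - v' ∈ Fj) : u = u' ∧ (v = v' → w = w') ∧ (w = w' → v = v') := by
  by_cases hk : w - w' ∈ Fk
  · exact h.E1 h1 h2 hi hj hk
  obtain ⟨y, hy, -, -, hy0, -, -⟩ := h.exj
  obtain ⟨z, hz⟩ := h.exK
  obtain ⟨c, hc, hcz⟩ := h.cz hN z
  have hcF : c ∉ Fk := fun hh => hz (by simpa using Fk.sub_mem hh hcz)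
  have hww : w ≠ w' := fun hh => hk (by rw [hh, sub_self]; exact Fk.zero_mem)
  have Tk : tyJ Fk (c - 0) (w - w') := tyJ_N (by simpa using hcF) hk
  have hu : u = u' := by
    by_contra hu
    have T : tyI Fi (s0 - 0) (u - u') := tyI_F h.s0n hu (by simpa using h.s0F) hi
    by_cases hv : v = v'
    · exact hu (h.sands hc h.a0 h1 h2 T (tyJ_zero rfl hv) Tk).1
    · exact hu (h.sands hc (h.a0y hy) h1 h2 T (tyJ_F hy0.symm hv (by simpa using hy) hj) Tk).1
  refine ⟨hu, fun hv => ?_, fun hw => absurd hw hww⟩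
  exact (h.sands hc h.a1 h1 h2 (tyI_zero rfl hu) (tyJ_zero rfl hv) Tk).2.2

end Mixed

lemma splitJ {xa ya za xb yb zb xa' ya' za' xb' yb' zb'} (ha : (xa, ya, za) ∈ A)
    (hb : (xb, yb, zb) ∈ B) (ha' : (xa', ya', za') ∈ A) (hb' : (xb', yb', zb') ∈ B)
    (ex : xa + xb = xa' + xb') (ez : za + zb = za' + zb') (ey : ya + yb - (ya' + yb') ∈ Fj)
    (ne : ya + yb ≠ ya' + yb') : ya - ya' ∈ Fj ∧ yb - yb' ∈ Fj ∧ (ya = ya' ∨ yb = yb') := by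
  apply split_J
  · rwa [sub_add_sub_comm]
  · intro T
    obtain ⟨g1, g2, g3⟩ := h.sands ha ha' hb hb' (tyI_neg (sub_add_sub_zero ex)) T
      (tyJ_neg (sub_add_sub_zero ez))
    have := sub_eq_zero.1 (tyJ_left T (sub_eq_zero.2 g2))
    exact ne (by rw [this, g2])

lemma splitK {xa ya za xb yb zb xa' ya' za' xb' yb' zb'} (ha : (xa, ya, za) ∈ A)
    (hb : (xb, yb, zb) ∈ B) (ha' : (xa', ya', za') ∈ A) (hb' : (xb', yb', zb') ∈ B)
    (ex : xa + xb = xa' + xb') (ey : ya + yb = ya' + yb') (ez : za + zb - (za' + zb') ∈ Fk)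
    (ne : za + zb ≠ za' + zb') : za - za' ∈ Fk ∧ zb - zb' ∈ Fk ∧ (za = za' ∨ zb = zb') := by
  apply split_J
  · rwa [sub_add_sub_comm]
  · intro T
    obtain ⟨g1, g2, g3⟩ := h.sands ha ha' hb hb' (tyI_neg (sub_add_sub_zero ex))
      (tyJ_neg (sub_add_sub_zero ey)) T
    have := sub_eq_zero.1 (tyJ_left T (sub_eq_zero.2 g3))
    exact ne (by rw [this, g3])

lemma splitI {xa ya za xb yb zb xa' ya' za' xb' yb' zb'} (ha : (xa, ya, za) ∈ A)
    (hb : (xb, yb, zb) ∈ B) (ha' : (xa', ya', za') ∈ A) (hb' : (xb', yb', zb') ∈ B)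
    (ey : ya + yb = ya' + yb') (ez : za + zb = za' + zb') (ex : xa + xb - (xa' + xb') ∈ Fi)
    (ne : xa + xb ≠ xa' + xb') : xa - xa' ∈ Fi ∧ xb - xb' ∈ Fi ∧ (xa = xa' ∨ xb = xb') := by
  apply split_I
  · rwa [sub_add_sub_comm]
  · intro T
    obtain ⟨g1, g2, g3⟩ := h.sands ha ha' hb hb' T (tyJ_neg (sub_add_sub_zero ey))
      (tyJ_neg (sub_add_sub_zero ez))
    have := sub_eq_zero.1 (tyI_left T (sub_eq_zero.2 g1))
    exact ne (by rw [this, g1])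

lemma Lset {x y1 k1 y2 k2} (b1 : (x, y1, k1) ∈ B) (b2 : (x, y2, k2) ∈ B) (hj : y1 - y2 ∈ Fj)
    (hj0 : y1 ≠ y2) (hk : k1 - k2 ∈ Fk) (hk0 : k1 ≠ k2) {y : J} (hy : y ∈ Fj) :
    ∃ k, (x, y1 + y, k) ∈ B := by
  have hN : ∃ x y k y' k', (x, y, k) ∈ B ∧ (x, y', k') ∈ B ∧ y - y' ∈ Fj ∧ y ≠ y' ∧
    k - k' ∈ Fk ∧ k ≠ k' := ⟨x, y1, k1, y2, k2, b1, b2, hj, hj0, hk, hk0⟩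
  by_cases hy0 : y = 0
  · exact ⟨k1, by simpa [hy0] using b1⟩
  by_cases hy2 : y1 + y = y2
  · exact ⟨k2, by rw [hy2]; exact b2⟩
  obtain ⟨xa, ya, za, xb, yb, zb, ha, hb, ex, ey, ez⟩ := h.cover (s0 + x) (y1 + y) k1
  obtain ⟨c1, c2, c3⟩ := h.splitJ ha hb h.a1 b1 ex (by rw [ez, zero_add])
    (by rw [ey]; simpa using hy) (by rw [ey]; simpa using hy0)
  obtain ⟨d1, d2, d3⟩ := h.splitJ ha hb (h.a1z hk) b2 ex (by rw [ez]; abel)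
    (by rw [ey, zero_add, add_sub_right_comm]; exact Fj.add_mem hj hy) (by rw [ey]; simpa using hy2)
  have hya : ya = 0 := by
    rcases c3 with e | e
    · exact e
    · rcases d3 with e' | e'
      · exact e'
      · exact absurd (e.symm.trans e') hj0
  subst hya
  rw [zero_add] at ey
  subst ey
  -- splitting in the `i` direction
  obtain ⟨g1, g2, g3⟩ := h.splitI ha hb (h.a0y hy) b1 (by abel) (by rw [ez, zero_add])
    (by rw [ex]; simpa using h.s0F) (by rw [ex]; simpa using h.s0n)
  have := (h.E2 hN hb b1 g2 (by simpa using hy)).1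
  subst this
  exact ⟨zb, hb⟩

/-- In the mixed case, `B` has a difference of type `(0, p_j, 1)`, so `A` does not. -/
lemma noA2 (hN : ∃ x y k y' k', (x, y, k) ∈ B ∧ (x, y', k') ∈ B ∧ y - y' ∈ Fj ∧ y ≠ y' ∧
    k - k' ∈ Fk ∧ k ≠ k') {y z} (hy : y ∈ Fj) (hy0 : y ≠ 0) (hz : z ∉ Fk) :
    ((0 : I), y, z) ∉ A := by
  intro ha
  have hN' := hN
  obtain ⟨x, y1, k1, y2, k2, b1, b2, hj, hj0, hk, hk0⟩ := hN'
  choose f hf using fun y : Fj => h.Lset b1 b2 hj hj0 hk hk0 y.2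
  have hin : ∀ y : Fj, f y - k1 ∈ Fk := by
    intro v
    by_contra hc
    have hne : y1 + v ≠ y1 := by
      intro e
      have : f v = k1 := (h.E2 hN (hf v) b1 (by simp) (by simp)).2.1 e
      exact hc (by rw [this, sub_self]; exact Fk.zero_mem)
    exact hne (h.sands ha h.a0 (hf v) b1 (tyI_zero rfl rfl)
      (tyJ_F hy0 hne (by simpa using hy) (by simp)) (tyJ_N (by simpa using hz) hc)).2.1
  have hinj : Function.Injective (fun y : Fj => (⟨f y - k1, hin y⟩ : Fk)) := by
    intro v v' e
    simp only [Subtype.mk.injEq, sub_left_inj] at e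
    have := (h.E2 hN (hf v) (hf v') (by simp)
      (by simpa using Fj.sub_mem v.2 v'.2)).2.2 e
    exact Subtype.ext (by simpa using this)
  have := Nat.card_le_card_of_injective _ hinj
  rw [h.cFj, h.cFk] at this
  exact absurd h.hkj (by omega)

lemma fullz (hN : ∃ x y k y' k', (x, y, k) ∈ B ∧ (x, y', k') ∈ B ∧ y - y' ∈ Fj ∧ y ≠ y' ∧
    k - k' ∈ Fk ∧ k ≠ k') (z : K) : (s0, (0 : J), z) ∈ A := by
  by_cases hz : z ∈ Fk
  · exact h.a1z hz
  obtain ⟨y, hy, -, -, hy0, -, -⟩ := h.exj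
  have e := h.key hy hy0 z
  rw [cnt_zero (S := A) (P := fun a => a.1 = 0 ∧ a.2.1 = y ∧ a.2.2 - z ∈ Fk)] at e
  · have e1 := cnt_nonneg A (fun a => a.1 = 0 ∧ a.2.1 = 0 ∧ a.2.2 - z ∈ Fk)
    have e2 := cnt_nonneg A (fun a => a.1 = s0 ∧ a.2.1 = y ∧ a.2.2 - z ∈ Fk)
    have := h.full (x := s0) (y := 0) (z := z) (by linarith) 0 Fk.zero_mem
    simpa using this
  · rintro ⟨a, b, c⟩ h1 ⟨h3, h4, h5⟩
    simp only at h3 h4 h5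
    subst h3 h4
    refine h.noA2 hN hy hy0 ?_ h1
    intro hc
    exact hz (by simpa using Fk.sub_mem hc h5)

/-- the count in a slice for B -/
lemma v_le_one (x : I) (y : J) (z : K) :
    cnt B (fun a => a.1 = x ∧ a.2.1 - y ∈ Fj ∧ a.2.2 = z) ≤ 1 := by
  apply cnt_le_one
  rintro ⟨a, b, c⟩ h1 ⟨a', b', c'⟩ h2 ⟨h3, h4, h5⟩ ⟨h3', h4', h5'⟩
  simp only at h3 h4 h5 h3' h4' h5'
  subst h3 h5 h3' h5'
  have := (h.E1 h1 h2 (by simp) (by simpa using Fj.sub_mem h4 h4') (by simp)).2.2 rfl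
  rw [this]

/-- `Φ_{M/p_j} ∣ B` near an element `b` with a missing neighbour. -/
lemma key2 {x y z} (b : (x, y, z) ∈ B) {s : I} (hs : s ∈ Fi) (hs0 : s ≠ 0) (u : J) {t : K}
    (ht : t ∈ Fk) (hmiss : ∀ y', y' - y ∈ Fj → (x, y', z + t) ∉ B) :
    1 + cnt B (fun a => a.1 = x + s ∧ a.2.1 - (y + u) ∈ Fj ∧ a.2.2 = z)
      + cnt B (fun a => a.1 = x ∧ a.2.1 - (y + u) ∈ Fj ∧ a.2.2 = z + t)
    = cnt B (fun a => a.1 = x ∧ a.2.1 - (y + u) ∈ Fj ∧ a.2.2 = z)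
      + cnt B (fun a => a.1 = x + s ∧ a.2.1 - (y + u) ∈ Fj ∧ a.2.2 = z + t) := by
  have e := h.C2 x y z s hs u t ht _ (fun _ _ _ => rfl)
  have e1 : cnt B (fun a => a.1 = x ∧ a.2.1 - y ∈ Fj ∧ a.2.2 = z) = 1 :=
    le_antisymm (h.v_le_one x y z) (cnt_pos.2 ⟨_, b, rfl, by simp, rfl⟩)
  have e2 : ∀ r ∈ Fk, cnt B (fun a => a.1 = x + s ∧ a.2.1 - y ∈ Fj ∧ a.2.2 = z + r) = 0 := by
    intro r hr
    apply cnt_zero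
    rintro ⟨a, b', c⟩ h1 ⟨h3, h4, h5⟩
    simp only at h3 h4 h5
    subst h3 h5
    have := (h.E1 h1 b (by simpa using hs) h4 (by simpa using hr)).1
    exact hs0 (by simpa using this)
  have e3 : cnt B (fun a => a.1 = x ∧ a.2.1 - y ∈ Fj ∧ a.2.2 = z + t) = 0 := by
    apply cnt_zero
    rintro ⟨a, b', c⟩ h1 ⟨h3, h4, h5⟩
    simp only at h3 h4 h5
    subst h3 h5
    exact hmiss _ h4 h1
  have e4 := e2 0 Fk.zero_mem
  rw [add_zero] at e4
  rw [e1, e2 t ht, e3, e4] at e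
  linarith

lemma exE3 {x y z} (b : (x, y, z) ∈ B) {t : K}
    (ht : t ∈ Fk) (hmiss : ∀ y', y' - y ∈ Fj → (x, y', z + t) ∉ B) :
    ∃ x v v' w, (x, v, w) ∈ B ∧ (x, v', w) ∈ B ∧ v - v' ∉ Fj := by
  obtain ⟨u, u', hu, hu', huu⟩ := h.exU
  have aux : ∀ u : J, u ∉ Fj → (∃ x v v' w, (x, v, w) ∈ B ∧ (x, v', w) ∈ B ∧ v - v' ∉ Fj) ∨
      ∃ v, v - (y + u) ∈ Fj ∧ (x + s0, v, z + t) ∈ B := by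
    intro u hu
    have e := h.key2 b h.s0F h.s0n u ht hmiss
    have e1 := cnt_nonneg B (fun a => a.1 = x + s0 ∧ a.2.1 - (y + u) ∈ Fj ∧ a.2.2 = z)
    have e2 := cnt_nonneg B (fun a => a.1 = x ∧ a.2.1 - (y + u) ∈ Fj ∧ a.2.2 = z + t)
    by_cases hp : 0 < cnt B (fun a => a.1 = x ∧ a.2.1 - (y + u) ∈ Fj ∧ a.2.2 = z)
    · left
      obtain ⟨⟨a, b', c⟩, h1, h3, h4, h5⟩ := cnt_pos.1 hp
      simp only at h3 h4 h5
      subst h3 h5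
      refine ⟨_, _, _, _, h1, b, fun hc => hu ?_⟩
      have := Fj.sub_mem hc h4
      simpa using this
    · right
      have hp2 : 0 < cnt B (fun a => a.1 = x + s0 ∧ a.2.1 - (y + u) ∈ Fj ∧ a.2.2 = z + t) := by
        linarith
      obtain ⟨⟨a, b', c⟩, h1, h3, h4, h5⟩ := cnt_pos.1 hp2
      simp only at h3 h4 h5
      subst h3 h5
      exact ⟨_, h4, h1⟩
  rcases aux u hu with g | ⟨v, hv, g⟩
  · exact g
  rcases aux u' hu' with g' | ⟨v', hv', g'⟩
  · exact g'
  refine ⟨_, _, _, _, g, g', fun hc => huu ?_⟩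
  have := Fj.add_mem (Fj.sub_mem hc hv) hv'
  have e : v - v' - (v - (y + u)) + (v' - (y + u')) = u - u' := by abel
  rwa [e] at this

/-- group completeness -/
lemma GC {x y1 k1 y2 k2} (b1 : (x, y1, k1) ∈ B) (b2 : (x, y2, k2) ∈ B) (hj : y1 - y2 ∈ Fj)
    (hj0 : y1 ≠ y2) (hk : k1 - k2 ∈ Fk) (hk0 : k1 ≠ k2) {t : K} (ht : t ∈ Fk) :
    ∃ y3, y3 - y1 ∈ Fj ∧ (x, y3, k1 + t) ∈ B := by
  have hN : ∃ x y k y' k', (x, y, k) ∈ B ∧ (x, y', k') ∈ B ∧ y - y' ∈ Fj ∧ y ≠ y' ∧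
    k - k' ∈ Fk ∧ k ≠ k' := ⟨x, y1, k1, y2, k2, b1, b2, hj, hj0, hk, hk0⟩
  by_contra hmiss
  push Not at hmiss
  have ht0 : t ≠ 0 := by
    rintro rfl
    exact hmiss y1 (by simp) (by simpa using b1)
  have hE3 := h.exE3 b1 ht hmiss
  have hkk : k1 + t ≠ k2 := by
    intro e
    exact hmiss y2 (by simpa using Fj.neg_mem hj) (e ▸ b2)
  obtain ⟨xa, ya, za, xb, yb, zb, ha, hb, ex, ey, ez⟩ := h.cover x y1 (k1 + t)
  obtain ⟨c1, c2, c3⟩ := h.splitK ha hb h.a0 b1 (by rw [ex, zero_add]) (by rw [ey, zero_add])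
    (by rw [ez]; simpa using ht) (by rw [ez]; simpa using ht0)
  obtain ⟨d1, d2, d3⟩ := h.splitK ha hb (h.a0y hj) b2 (by rw [ex, zero_add]) (by rw [ey]; abel)
    (by rw [ez, zero_add, add_sub_right_comm]; exact Fk.add_mem hk ht) (by rw [ez]; simpa using hkk)
  have hza : za = 0 := by
    rcases c3 with e | e
    · exact e
    · rcases d3 with e' | e'
      · exact e'
      · exact absurd (e.symm.trans e') hk0
  subst hza
  rw [zero_add] at ez
  subst ez
  obtain ⟨g1, g2, g3⟩ := h.splitI ha hb (h.a1z ht) b1 (by rw [ey, zero_add]) (by abel)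
    (by rw [ex]; simpa using h.s0F) (by rw [ex]; simpa using h.s0n)
  have hyb : yb - y1 ∉ Fj := by
    intro hc
    have := (h.E2 hN hb b1 g2 hc).1
    subst this
    exact hmiss _ hc hb
  have hya : ya ∉ Fj := by
    intro hc
    apply hyb
    have := Fj.neg_mem hc
    have e : yb - y1 = -ya := by rw [← ey]; abel
    rwa [e]
  rcases g3 with e | e
  · subst e
    exact hya (by simpa using h.E3 hE3 ha h.a1)
  · subst e
    have : xa = 0 := by simpa using ex
    subst this
    exact hya (by simpa using h.E3 hE3 ha h.a0)
end Setup
end Comb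
end S18

namespace S18
section Comb
variable {I J K : Type*} [AddCommGroup I] [AddCommGroup J] [AddCommGroup K]
  [Fintype I] [Fintype J] [Fintype K]
variable {Fi : AddSubgroup I} {Fj : AddSubgroup J} {Fk : AddSubgroup K}
    {A B : Finset (I × J × K)} {s0 : I} {pi pj pk : ℕ}
namespace Setup
variable (h : Setup Fi Fj Fk A B s0 pi pj pk)
include h

lemma exIso : ∃ x y k, (x, y, k) ∈ B ∧ ∀ x2 y2 k2, (x2, y2, k2) ∈ B → x2 - x ∈ Fi →
    y2 - y ∈ Fj → k2 - k ∈ Fk → x2 = x ∧ y2 = y ∧ k2 = k := by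
  classical
  by_cases hN : ∃ x y k y' k', (x, y, k) ∈ B ∧ (x, y', k') ∈ B ∧ y - y' ∈ Fj ∧ y ≠ y' ∧
    k - k' ∈ Fk ∧ k ≠ k'
  · have hN' := hN
    obtain ⟨x, y1, k1, y2, k2, b1, b2, hj, hj0, hk, hk0⟩ := hN'
    choose f hf using fun y : Fj => h.Lset b1 b2 hj hj0 hk hk0 y.2
    have hinj : Function.Injective f := by
      intro v v' e
      have := (h.E2 hN (hf v) (hf v') (by simp) (by simpa using Fj.sub_mem v.2 v'.2)).2.2 e
      exact Subtype.ext (by simpa using this)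
    have hmiss : ∃ v, ∃ t ∈ Fk, ∀ v', f v' ≠ f v + t := by
      by_contra hc
      push Not at hc
      have hd : pk ∣ (Finset.univ.image f).card := by
        rw [Finset.card_eq_sum_card_fiberwise
          (f := fun k => (QuotientAddGroup.mk k : K ⧸ Fk)) (t := Finset.univ) (by intro; simp)]
        apply Finset.dvd_sum
        intro q _
        by_cases hq : ∃ v, (QuotientAddGroup.mk (f v) : K ⧸ Fk) = q
        · obtain ⟨v, rfl⟩ := hq
          have : {k ∈ Finset.univ.image f | (QuotientAddGroup.mk k : K ⧸ Fk)
              = QuotientAddGroup.mk (f v)} = Finset.univ.image (fun t : Fk => f v + t) := by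
            ext k
            simp only [Finset.mem_filter, Finset.mem_image, Finset.mem_univ, true_and]
            constructor
            · rintro ⟨⟨v', rfl⟩, e⟩
              have := QuotientAddGroup.eq.1 e.symm
              exact ⟨⟨_, this⟩, by simp⟩
            · rintro ⟨t, rfl⟩
              exact ⟨hc v t t.2, by simp⟩
          rw [this, Finset.card_image_of_injective _ (by intro a b; simp), Finset.card_univ,
            ← Nat.card_eq_fintype_card, h.cFk]
        · rw [Finset.card_eq_zero.2]
          · exact dvd_zero _
          · ext k
            simp only [Finset.mem_filter, Finset.mem_image, Finset.mem_univ, true_and,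
              Finset.notMem_empty, iff_false]
            rintro ⟨⟨v', rfl⟩, e⟩
            exact hq ⟨v', e⟩
      rw [Finset.card_image_of_injective _ hinj, Finset.card_univ, ← Nat.card_eq_fintype_card,
        h.cFj, Nat.prime_dvd_prime_iff_eq h.hpk h.hpj] at hd
      exact absurd h.hkj (by omega)
    obtain ⟨v, t, ht, hvt⟩ := hmiss
    refine ⟨x, y1 + v, f v, hf v, ?_⟩
    intro x2 y2 k2 hb hx hy hk
    obtain ⟨g1, g2, g3⟩ := h.E1 hb (hf v) hx hy hk
    subst g1
    by_cases e : y2 = y1 + v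
    · exact ⟨rfl, e, g2 e⟩
    · exfalso
      have e' : k2 ≠ f v := fun e' => e (g3 e')
      obtain ⟨y3, hy3, b3⟩ := h.GC (hf v) hb (by simpa using Fj.neg_mem hy) (Ne.symm e)
        (by simpa using Fk.neg_mem hk) (Ne.symm e') ht
      have hw : y3 - y1 ∈ Fj := by
        have := Fj.add_mem hy3 v.2
        have e : y3 - (y1 + v) + v = y3 - y1 := by abel
        rwa [e] at this
      refine hvt ⟨y3 - y1, hw⟩ ((h.E2 hN (hf ⟨y3 - y1, hw⟩) b3 (by simp) (by simp)).2.1 (by simp))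
  · obtain ⟨⟨x, y, k⟩, hb⟩ := h.neB
    refine ⟨x, y, k, hb, ?_⟩
    intro x2 y2 k2 hb2 hx hy hk
    obtain ⟨g1, g2, g3⟩ := h.E1 hb2 hb hx hy hk
    subst g1
    by_cases e : y2 = y
    · exact ⟨rfl, e, g2 e⟩
    · exact absurd ⟨_, _, _, _, _, hb2, hb, hy, e, hk, fun ee => e (g3 ee)⟩ hN

/-- `B` is fibered (modulo `Fj`) at an isolated point. -/
lemma fib {x y k} (b : (x, y, k) ∈ B) (iso : ∀ x2 y2 k2, (x2, y2, k2) ∈ B → x2 - x ∈ Fi →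
    y2 - y ∈ Fj → k2 - k ∈ Fk → x2 = x ∧ y2 = y ∧ k2 = k) (u : J) :
    ∃ v, v - (y + u) ∈ Fj ∧ (x, v, k) ∈ B := by
  classical
  by_contra hc
  push Not at hc
  have c0 : cnt B (fun a => a.1 = x ∧ a.2.1 - (y + u) ∈ Fj ∧ a.2.2 = k) = 0 := by
    apply cnt_zero
    rintro ⟨a, b, c⟩ h1 ⟨h3, h4, h5⟩
    simp only at h3 h4 h5
    subst h3 h5
    exact hc _ h4 h1
  have main : ∀ s ∈ Fi, s ≠ 0 → ∀ t ∈ Fk, t ≠ 0 →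
      (∀ v, v - (y + u) ∈ Fj → (x + s, v, k) ∉ B) ∧
      ∃ v, v - (y + u) ∈ Fj ∧ (x + s, v, k + t) ∈ B := by
    intro s hs hs0 t ht ht0
    have e := h.key2 b hs hs0 u ht (by
      intro y' hy' hb
      have := (iso _ _ _ hb (by simp) hy' (by simpa using ht)).2.2
      exact ht0 (by simpa using this))
    have e1 := cnt_nonneg B (fun a => a.1 = x + s ∧ a.2.1 - (y + u) ∈ Fj ∧ a.2.2 = k)
    have e2 := cnt_nonneg B (fun a => a.1 = x ∧ a.2.1 - (y + u) ∈ Fj ∧ a.2.2 = k + t)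
    have e3 := h.v_le_one (x + s) (y + u) (k + t)
    constructor
    · intro v hv hb
      have : 0 < cnt B (fun a => a.1 = x + s ∧ a.2.1 - (y + u) ∈ Fj ∧ a.2.2 = k) :=
        cnt_pos.2 ⟨_, hb, rfl, hv, rfl⟩
      linarith
    · have : 0 < cnt B (fun a => a.1 = x + s ∧ a.2.1 - (y + u) ∈ Fj ∧ a.2.2 = k + t) := by linarith
      obtain ⟨⟨a, b', c⟩, h1, h3, h4, h5⟩ := cnt_pos.1 this
      simp only at h3 h4 h5
      subst h3 h5
      exact ⟨_, h4, h1⟩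
  by_cases hpk : 3 ≤ pk
  · have h3 : 2 < Nat.card Fk := by rw [h.cFk]; omega
    rw [Nat.card_eq_fintype_card, ← Finset.card_univ] at h3
    have h1 : 1 < (Finset.univ.erase (0 : Fk)).card := by
      rw [Finset.card_erase_of_mem (Finset.mem_univ _)]; omega
    obtain ⟨t, ht, t', ht', htt⟩ := Finset.one_lt_card.1 h1
    have ht0 : (t : K) ≠ 0 := by simpa using ht
    have ht0' : (t' : K) ≠ 0 := by simpa using ht'
    obtain ⟨g, v, hv, hb⟩ := main s0 h.s0F h.s0n t t.2 ht0
    obtain ⟨-, v', hv', hb'⟩ := main s0 h.s0F h.s0n t' t'.2 ht0'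
    have htt' : k + (t : K) ≠ k + t' := fun e => htt (Subtype.ext (by simpa using e))
    have hj : v - v' ∈ Fj := by simpa using Fj.sub_mem hv hv'
    have hk : k + (t : K) - (k + t') ∈ Fk := by simpa using Fk.sub_mem t.2 t'.2
    have hvv : v ≠ v' := fun e => htt' ((h.E1 hb hb' (by simp) hj hk).2.1 e)
    obtain ⟨y3, hy3, b3⟩ := h.GC hb hb' hj hvv hk htt' (Fk.neg_mem t.2)
    rw [add_neg_cancel_right] at b3
    exact g y3 (by simpa using Fj.add_mem hy3 hv) b3
  · have h3 : 2 < Nat.card Fi := by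
      rw [h.cFi]; have := h.hpk.two_le; have := h.hik; have := h.hpi; omega
    rw [Nat.card_eq_fintype_card, ← Finset.card_univ] at h3
    have h1 : 1 < (Finset.univ.erase (0 : Fi)).card := by
      rw [Finset.card_erase_of_mem (Finset.mem_univ _)]; omega
    obtain ⟨s, hs, s', hs', hss⟩ := Finset.one_lt_card.1 h1
    obtain ⟨t, ht, ht0⟩ := h.exk
    obtain ⟨-, v, hv, hb⟩ := main s s.2 (by simpa using hs) t ht ht0
    obtain ⟨-, v', hv', hb'⟩ := main s' s'.2 (by simpa using hs') t ht ht0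
    have := (h.E1 hb hb' (by simpa using Fi.sub_mem s.2 s'.2) (by simpa using Fj.sub_mem hv hv')
      (by simp)).1
    exact hss (Subtype.ext (by simpa using this))

/-- There is a column of `B` which is isolated. -/
lemma exCol : ∃ x k, (∀ u : J, ∃ v, v - u ∈ Fj ∧ (x, v, k) ∈ B) ∧
    (∀ x2 y2 k2, (x2, y2, k2) ∈ B → x2 - x ∈ Fi → k2 - k ∈ Fk → x2 = x ∧ k2 = k) := by
  obtain ⟨x, y, k, b, iso⟩ := h.exIso
  refine ⟨x, k, ?_, ?_⟩
  · intro u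
    obtain ⟨v, hv, hb⟩ := h.fib b iso (u - y)
    exact ⟨v, by simpa using hv, hb⟩
  · intro x2 y2 k2 hb hx hk
    obtain ⟨v, hv, hbv⟩ := h.fib b iso (y2 - y)
    have hv' : v - y2 ∈ Fj := by simpa using hv
    obtain ⟨g1, -, g3⟩ := h.E1 hb hbv hx (by simpa using Fj.neg_mem hv') hk
    subst g1
    refine ⟨rfl, ?_⟩
    by_contra hne
    have ht0 : k2 - k ≠ 0 := sub_ne_zero.2 hne
    have e := h.key2 b h.s0F h.s0n (y2 - y) hk (by
      intro y' hy' hb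
      have := (iso _ _ _ hb (by simp) hy' (by simpa using hk)).2.2
      exact hne (by simpa using this))
    simp only [add_sub_cancel] at e
    have e0 : cnt B (fun a => a.1 = x2 + s0 ∧ a.2.1 - y2 ∈ Fj ∧ a.2.2 = k2) = 0 := by
      apply cnt_zero
      rintro ⟨a, b, c⟩ h1 ⟨h3, h4, h5⟩
      simp only at h3 h4 h5
      subst h3 h5
      have := (h.E1 h1 hb (by simpa using h.s0F) h4 (by simp)).1
      exact h.s0n (by simpa using this)
    have e1 := h.v_le_one x2 y2 k
    have e2 := cnt_nonneg B (fun a => a.1 = x2 + s0 ∧ a.2.1 - y2 ∈ Fj ∧ a.2.2 = k)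
    have e3 : 0 < cnt B (fun a => a.1 = x2 ∧ a.2.1 - y2 ∈ Fj ∧ a.2.2 = k2) :=
      cnt_pos.2 ⟨_, hb, rfl, by simp, rfl⟩
    linarith
end Setup
end Comb
end S18

namespace S18
section Comb
variable {I J K : Type*} [AddCommGroup I] [AddCommGroup J] [AddCommGroup K]
  [Fintype I] [Fintype J] [Fintype K]
variable {Fi : AddSubgroup I} {Fj : AddSubgroup J} {Fk : AddSubgroup K}
    {A B : Finset (I × J × K)} {s0 : I} {pi pj pk : ℕ}

lemma cnt_fiber {S : Finset (I × J × K)} {P : I × J × K → Prop} {T : Type*} (s : Finset T)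
    (f : I × J × K → T) (Q : T → I × J × K → Prop) (hP : ∀ a ∈ S, P a → f a ∈ s)
    (hQ : ∀ t ∈ s, ∀ a ∈ S, Q t a ↔ P a ∧ f a = t) :
    cnt S P = ∑ t ∈ s, cnt S (Q t) := by
  classical
  unfold cnt
  rw [← Nat.cast_sum, Finset.card_eq_sum_card_fiberwise (f := f) (t := s)]
  · congr 1
    apply Finset.sum_congr rfl
    intro t ht
    congr 1
    ext a
    simp only [Finset.mem_filter]
    constructor
    · rintro ⟨⟨h1, h2⟩, h3⟩
      exact ⟨h1, (hQ t ht a h1).2 ⟨h2, h3⟩⟩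
    · rintro ⟨h1, h2⟩
      exact ⟨⟨h1, ((hQ t ht a h1).1 h2).1⟩, ((hQ t ht a h1).1 h2).2⟩
  · intro a ha
    simp only [Finset.coe_filter, Set.mem_ofPred_eq] at ha
    exact hP a ha.1 ha.2

lemma mul_le_cnt {S : Finset (I × J × K)} {P : I × J × K → Prop} {T : Type*} (s : Finset T)
    (f : I × J × K → T) (Q : T → I × J × K → Prop) (hP : ∀ a ∈ S, P a → f a ∈ s)
    (hQ : ∀ t ∈ s, ∀ a ∈ S, Q t a ↔ P a ∧ f a = t) (n : ℤ) (hn : ∀ t ∈ s, n ≤ cnt S (Q t)) :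
    s.card * n ≤ cnt S P := by
  rw [cnt_fiber s f Q hP hQ, ← nsmul_eq_mul]
  exact Finset.card_nsmul_le_sum _ _ _ hn

lemma cnt_add_le {S : Finset (I × J × K)} {P Q R : I × J × K → Prop}
    (hP : ∀ a ∈ S, P a → R a) (hQ : ∀ a ∈ S, Q a → R a) (hd : ∀ a ∈ S, P a → ¬ Q a) :
    cnt S P + cnt S Q ≤ cnt S R := by
  classical
  unfold cnt
  rw [← Nat.cast_add, ← Finset.card_union_of_disjoint]
  · apply Nat.cast_le.2
    apply Finset.card_le_card
    intro a ha
    simp only [Finset.mem_union, Finset.mem_filter] at ha ⊢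
    rcases ha with ha | ha
    · exact ⟨ha.1, hP a ha.1 ha.2⟩
    · exact ⟨ha.1, hQ a ha.1 ha.2⟩
  · rw [Finset.disjoint_left]
    intro a ha ha'
    simp only [Finset.mem_filter] at ha ha'
    exact hd a ha.1 ha.2 ha'.2

lemma mem_iff_mk {z : K} {q : K ⧸ Fk} : z - q.out ∈ Fk ↔ (QuotientAddGroup.mk z : K ⧸ Fk) = q := by
  constructor
  · intro hz
    rw [← QuotientAddGroup.out_eq' q, eq_comm, QuotientAddGroup.eq, ← sub_eq_neg_add]
    exact hz
  · rintro e
    have e' : (QuotientAddGroup.mk q.out : K ⧸ Fk) = QuotientAddGroup.mk z := by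
      rw [QuotientAddGroup.out_eq', e]
    rw [QuotientAddGroup.eq, ← sub_eq_neg_add] at e'
    exact e'

namespace Setup
variable (h : Setup Fi Fj Fk A B s0 pi pj pk)
include h

lemma cKq : Nat.card (K ⧸ Fk) = pk := by
  have := AddSubgroup.card_eq_card_quotient_mul_card_addSubgroup Fk
  rw [h.cFk, Nat.card_eq_fintype_card, h.cK, pow_two] at this
  exact (Nat.eq_of_mul_eq_mul_right h.hpk.pos this).symm

lemma cJq : Nat.card (J ⧸ Fj) = pj := by
  have := AddSubgroup.card_eq_card_quotient_mul_card_addSubgroup Fj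
  rw [h.cFj, Nat.card_eq_fintype_card, h.cJ, pow_two] at this
  exact (Nat.eq_of_mul_eq_mul_right h.hpj.pos this).symm

lemma sumK [Fintype (K ⧸ Fk)] {S : Finset (I × J × K)} (x : I) : cnt S (fun a => a.1 = x) =
    ∑ q : K ⧸ Fk, cnt S (fun a => a.1 = x ∧ a.2.2 - q.out ∈ Fk) := by
  apply cnt_fiber _ (fun a => (QuotientAddGroup.mk a.2.2 : K ⧸ Fk))
  · intros; simp
  · rintro q - ⟨a, b, c⟩ -
    simp only [mem_iff_mk]

lemma capacity (x x' : I) : cnt A (fun a => a.1 = x) * cnt B (fun a => a.1 = x') ≤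
    pj ^ 2 * pk ^ 2 := by
  classical
  unfold cnt
  rw [← Nat.cast_mul, ← Finset.card_product]
  have : ((pj : ℤ) ^ 2 * pk ^ 2) = ((Finset.univ : Finset (J × K)).card : ℤ) := by
    rw [Finset.card_univ, Fintype.card_prod, h.cJ, h.cK]; push_cast; ring
  rw [this]
  apply Nat.cast_le.2
  apply Finset.card_le_card_of_injOn (fun p => p.1.2 + p.2.2) (by intro; simp)
  rintro ⟨⟨a, b, c⟩, ⟨u, v, w⟩⟩ h1 ⟨⟨a', b', c'⟩, ⟨u', v', w'⟩⟩ h2 e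
  simp only [Finset.coe_product, Finset.coe_filter, Set.mem_prod, Set.mem_ofPred_eq] at h1 h2
  obtain ⟨⟨m1, rfl⟩, ⟨m2, rfl⟩⟩ := h1
  obtain ⟨⟨m3, rfl⟩, ⟨m4, rfl⟩⟩ := h2
  simp only [Prod.mk_add_mk, Prod.mk.injEq] at e
  obtain ⟨g1, g2, g3⟩ := h.sands m1 m3 m2 m4 (tyI_zero rfl rfl)
    (tyJ_neg (sub_add_sub_zero e.1)) (tyJ_neg (sub_add_sub_zero e.2))
  subst g2 g3
  simp only [add_left_inj] at e
  simp [e]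

section Col
variable {x : I} {k : K} (c1 : ∀ u : J, ∃ v, v - u ∈ Fj ∧ (x, v, k) ∈ B)
    (c2 : ∀ x2 y2 k2, (x2, y2, k2) ∈ B → x2 - x ∈ Fi → k2 - k ∈ Fk → x2 = x ∧ k2 = k)
include c1

lemma hE3 : ∃ x v v' w, (x, v, w) ∈ B ∧ (x, v', w) ∈ B ∧ v - v' ∉ Fj := by
  obtain ⟨u, -, hu, -, -⟩ := h.exU
  obtain ⟨v, hv, hb⟩ := c1 0
  obtain ⟨v', hv', hb'⟩ := c1 u
  refine ⟨_, _, _, _, hb', hb, fun hc => hu ?_⟩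
  have := Fj.sub_mem (Fj.add_mem hc hv) hv'
  have e : v' - v + (v - 0) - (v' - u) = u := by abel
  rwa [e] at this

include c2

lemma C3A {t : K} (ht : t ∈ Fk) : cnt A (fun a => a.1 = 0 ∧ a.2.2 = t) = pj := by
  classical
  have hE := h.hE3 c1
  rcases h.C3 with C | C
  · have e := C 0 0 s0 h.s0F t ht
    simp only [zero_add] at e
    have e1 : ∀ t ∈ Fk, cnt A (fun a => a.1 = s0 ∧ a.2.2 = t) = 1 := by
      intro t ht
      apply le_antisymm
      · apply cnt_le_one
        rintro ⟨a, b, c⟩ h1 ⟨a', b', c'⟩ h2 ⟨h3, h5⟩ ⟨h3', h5'⟩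
        simp only at h3 h5 h3' h5'
        subst h3 h5 h3' h5'
        have g : b ∈ Fj := by simpa using h.E3 hE h1 (h.a1z ht)
        have g' : b' ∈ Fj := by simpa using h.E3 hE h2 (h.a1z ht)
        rw [h.A1 _ g _ ht] at h1
        rw [h.A1 _ g' _ ht] at h2
        rw [h1, h2]
      · exact cnt_pos.2 ⟨_, h.a1z ht, rfl, rfl⟩
    have e2 : cnt A (fun a => a.1 = 0 ∧ a.2.2 = 0) = pj := by
      rw [← h.cFj, Nat.card_eq_fintype_card, ← Finset.card_univ]
      apply le_antisymm
      · apply cnt_le (f := fun a => if ha : a.2.1 ∈ Fj then (⟨a.2.1, ha⟩ : Fj) else 0)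
        · rintro ⟨a, b, c⟩ h1 ⟨a', b', c'⟩ h2 ⟨h3, h5⟩ ⟨h3', h5'⟩ hh
          simp only at h3 h5 h3' h5'
          subst h3 h5 h3' h5'
          have g : b ∈ Fj := by simpa using h.E3 hE h1 h.a0
          have g' : b' ∈ Fj := by simpa using h.E3 hE h2 h.a0
          simp only [g, g', dif_pos, Subtype.mk.injEq] at hh
          rw [hh]
        · intros; simp
      · apply le_cnt _ (fun t : Fj => ((0 : I), (t : J), (0 : K)))
        · intro t _ t' _ hh
          simpa using hh
        · intro t _
          exact ⟨h.a0y t.2, rfl, rfl⟩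
    rw [e1 0 Fk.zero_mem, e1 t ht, e2] at e
    linarith
  · exfalso
    obtain ⟨t, ht, ht0⟩ := h.exk
    have e := C x k s0 h.s0F t ht
    rw [cnt_zero (S := B) (P := fun a => a.1 = x + s0 ∧ a.2.2 = k),
      cnt_zero (S := B) (P := fun a => a.1 = x ∧ a.2.2 = k + t)] at e
    · have e2 := cnt_nonneg B (fun a => a.1 = x + s0 ∧ a.2.2 = k + t)
      obtain ⟨v, -, hb⟩ := c1 0
      have : 0 < cnt B (fun a => a.1 = x ∧ a.2.2 = k) := cnt_pos.2 ⟨_, hb, rfl, rfl⟩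
      linarith
    · rintro ⟨a, b, c⟩ h1 ⟨h3, h5⟩
      simp only at h3 h5
      subst h3 h5
      have := (c2 _ _ _ h1 (by simp) (by simpa using ht)).2
      exact ht0 (by simpa using this)
    · rintro ⟨a, b, c⟩ h1 ⟨h3, h5⟩
      simp only at h3 h5
      subst h3 h5
      have := (c2 _ _ _ h1 (by simpa using h.s0F) (by simp)).1
      exact h.s0n (by simpa using this)

lemma exr : ∃ r t, r ∉ Fj ∧ t ∈ Fk ∧ t ≠ 0 ∧ ((0 : I), r, t) ∈ A := by
  obtain ⟨t, ht, ht0⟩ := h.exk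
  have e := h.C3A c1 c2 ht
  have : 0 < cnt A (fun a => a.1 = 0 ∧ a.2.2 = t) := by
    rw [e]; exact_mod_cast h.hpj.pos
  obtain ⟨⟨a, b, c⟩, h1, h3, h5⟩ := cnt_pos.1 this
  simp only at h3 h5
  subst h3 h5
  exact ⟨b, c, fun hb => ht0 ((h.A0 _ hb _ ht).1 h1), ht, ht0, h1⟩

/-- lower bound on `α'(0, 0)` -/
lemma alp0 : (pk : ℤ) * pj ≤ cnt A (fun a => a.1 = 0 ∧ a.2.2 ∈ Fk) := by
  classical
  have := mul_le_cnt (S := A) (P := fun a => a.1 = 0 ∧ a.2.2 ∈ Fk)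
    (Finset.univ.filter (fun z : K => z ∈ Fk)) (fun a => a.2.2)
    (fun t a => a.1 = 0 ∧ a.2.2 = t) (by
      rintro ⟨a, b, c⟩ - ⟨-, hc⟩
      simpa using hc) (by
      rintro t ht ⟨a, b, c⟩ -
      simp only [Finset.mem_filter, Finset.mem_univ, true_and] at ht
      constructor
      · rintro ⟨e1, e2⟩
        exact ⟨⟨e1, e2 ▸ ht⟩, e2⟩
      · rintro ⟨⟨e1, -⟩, e2⟩
        exact ⟨e1, e2⟩) pj (by
      intro t ht
      simp only [Finset.mem_filter, Finset.mem_univ, true_and] at ht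
      exact (h.C3A c1 c2 ht).ge)
  have hc : (Finset.univ.filter (fun z : K => z ∈ Fk)).card = pk := by
    rw [← h.cFk, Nat.card_eq_fintype_card, Fintype.card_subtype]
  rwa [hc] at this

lemma alp1 : cnt A (fun a => a.1 = s0 ∧ a.2.2 ∈ Fk) ≤ pk := by
  classical
  have hE := h.hE3 c1
  rw [← h.cFk, Nat.card_eq_fintype_card, ← Finset.card_univ]
  apply cnt_le (f := fun a => if ha : a.2.2 ∈ Fk then (⟨a.2.2, ha⟩ : Fk) else 0)
  · rintro ⟨a, b, c⟩ h1 ⟨a', b', c'⟩ h2 ⟨h3, h5⟩ ⟨h3', h5'⟩ hh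
    simp only at h3 h5 h3' h5'
    subst h3 h3'
    simp only [h5, h5', dif_pos, Subtype.mk.injEq] at hh
    subst hh
    have g : b ∈ Fj := by simpa using h.E3 hE h1 (h.a1z h5)
    have g' : b' ∈ Fj := by simpa using h.E3 hE h2 (h.a1z h5)
    rw [h.A1 _ g _ h5] at h1
    rw [h.A1 _ g' _ h5] at h2
    rw [h1, h2]
  · intros; simp

lemma Ik {u v w u' v' w'} (h1 : (u, v, w) ∈ B) (h2 : (u', v', w') ∈ B) (hi : u - u' ∈ Fi)
    (hk : w - w' ∈ Fk) : u = u' := by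
  by_cases hv : v - v' ∈ Fj
  · exact (h.E1 h1 h2 hi hv hk).1
  by_contra hu
  obtain ⟨r, t, hr, ht, ht0, ha⟩ := h.exr c1 c2
  have T : tyI Fi (0 - s0) (u - u') := tyI_F (Ne.symm h.s0n) hu (by simpa using h.s0F) hi
  have TJ : tyJ Fj (r - 0) (v - v') := tyJ_N (by simpa using hr) hv
  by_cases hw : w = w'
  · exact hu (h.sands ha (h.a1z ht) h1 h2 T TJ (tyJ_zero rfl hw)).1
  · exact hu (h.sands ha h.a1 h1 h2 T TJ (tyJ_F ht0 hw (by simpa using ht) hk)).1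

lemma Iall {z : K} (hz : z ∉ Fk) (hzA : (s0, (0 : J), z) ∈ A) {u v w u' v' w'}
    (h1 : (u, v, w) ∈ B) (h2 : (u', v', w') ∈ B) (hi : u - u' ∈ Fi) : u = u' := by
  by_cases hk : w - w' ∈ Fk
  · exact h.Ik c1 c2 h1 h2 hi hk
  by_contra hu
  have T : tyI Fi (s0 - 0) (u - u') := tyI_F h.s0n hu (by simpa using h.s0F) hi
  have TK : tyJ Fk (z - 0) (w - w') := tyJ_N (by simpa using hz) hk
  by_cases hv : v - v' ∈ Fj
  · by_cases hv0 : v = v'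
    · exact hu (h.sands hzA h.a0 h1 h2 T (tyJ_zero rfl hv0) TK).1
    · obtain ⟨y, hy, -, -, hy0, -, -⟩ := h.exj
      exact hu (h.sands hzA (h.a0y hy) h1 h2 T (tyJ_F hy0.symm hv0 (by simpa using hy) hv) TK).1
  · obtain ⟨r, t, hr, ht, ht0, ha⟩ := h.exr c1 c2
    refine hu (h.sands hzA ha h1 h2 T (tyJ_N (by simpa using hr) hv) (tyJ_N (fun hc => hz ?_) hk)).1
    simpa using Fk.add_mem hc ht

/-- the case where `Φ_{p_i^n p_k}` divides `B` -/
lemma caseB (C : ∀ x z, ∀ s ∈ Fi, ∀ t,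
      cnt B (fun a => a.1 = x ∧ a.2.2 - z ∈ Fk) - cnt B (fun a => a.1 = x + s ∧ a.2.2 - z ∈ Fk)
      - cnt B (fun a => a.1 = x ∧ a.2.2 - (z + t) ∈ Fk)
      + cnt B (fun a => a.1 = x + s ∧ a.2.2 - (z + t) ∈ Fk) = 0) : False := by
  classical
  have hE := h.hE3 c1
  have b0 : (pj : ℤ) ≤ cnt B (fun a => a.1 = x ∧ a.2.2 - k ∈ Fk) := by
    rw [← h.cJq, Nat.card_eq_fintype_card, ← Finset.card_univ]
    choose f hf1 hf2 using fun q : J ⧸ Fj => c1 q.out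
    apply le_cnt _ (fun q : J ⧸ Fj => (x, f q, k))
    · intro q _ q' _ e
      simp only [Prod.mk.injEq, true_and, and_true] at e
      have e1 := mem_iff_mk.1 (hf1 q)
      have e2 := mem_iff_mk.1 (hf1 q')
      rw [← e1, ← e2, e]
    · intro q _
      exact ⟨hf2 q, rfl, by simp⟩
  have b1 : ∀ z, (pj : ℤ) ≤ cnt B (fun a => a.1 = x ∧ a.2.2 - z ∈ Fk) := by
    intro z
    have e := C x k s0 h.s0F (z - k)
    simp only [add_sub_cancel] at e
    rw [cnt_zero (S := B) (P := fun a => a.1 = x + s0 ∧ a.2.2 - k ∈ Fk)] at e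
    · have := cnt_nonneg B (fun a => a.1 = x + s0 ∧ a.2.2 - z ∈ Fk)
      linarith
    · rintro ⟨a, b, c⟩ m1 ⟨h3, h5⟩
      simp only at h3 h5
      subst h3
      have := (c2 _ _ _ m1 (by simpa using h.s0F) h5).1
      exact h.s0n (by simpa using this)
  have b2 : (pk : ℤ) * pj ≤ cnt B (fun a => a.1 = x) := by
    rw [h.sumK x, ← h.cKq, Nat.card_eq_fintype_card, ← Finset.card_univ, ← nsmul_eq_mul]
    exact Finset.card_nsmul_le_sum _ _ _ (fun q _ => b1 _)
  have pjpos : (0 : ℤ) < pj := by exact_mod_cast h.hpj.pos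
  have pkpos : (0 : ℤ) < pk := by exact_mod_cast h.hpk.pos
  have hlt : (pk : ℤ) < pj := by exact_mod_cast h.hkj
  have a2 : cnt A (fun a => a.1 = 0) ≤ pk * pj := by
    have e := h.capacity 0 x
    by_contra hc
    push Not at hc
    have hp : (0 : ℤ) < pk * pj := by positivity
    nlinarith
  have a3 := h.alp0 c1 c2
  have no0 : ∀ y z, z ∉ Fk → ((0 : I), y, z) ∉ A := by
    intro y z hz ha
    have := cnt_add_le (S := A) (P := fun a => a.1 = 0 ∧ a.2.2 ∈ Fk)
      (Q := fun a => a.1 = 0 ∧ a.2.2 ∉ Fk) (R := fun a => a.1 = 0)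
      (fun a _ g => g.1) (fun a _ g => g.1) (fun a _ g g' => g'.2 g.2)
    have h0 : 0 < cnt A (fun a => a.1 = 0 ∧ a.2.2 ∉ Fk) := cnt_pos.2 ⟨_, ha, rfl, hz⟩
    linarith
  have c0 : ∀ y z, z ∉ Fk → cnt A (fun a => a.1 = 0 ∧ a.2.1 = y ∧ a.2.2 - z ∈ Fk) = 0 := by
    intro y z hz
    apply cnt_zero
    rintro ⟨a, b, c⟩ m1 ⟨h3, h4, h5⟩
    simp only at h3 h4 h5
    subst h3 h4
    refine no0 _ _ (fun hc => hz ?_) m1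
    simpa using Fk.sub_mem hc h5
  obtain ⟨y0, hy0, -, -, hy00, -, -⟩ := h.exj
  have fl : ∀ z, z ∉ Fk → (s0, (0 : J), z) ∈ A := by
    intro z hz
    have e := h.key hy0 hy00 z
    rw [c0 _ _ hz, c0 _ _ hz] at e
    have e2 := cnt_nonneg A (fun a => a.1 = s0 ∧ a.2.1 = y0 ∧ a.2.2 - z ∈ Fk)
    have := h.full (x := s0) (y := 0) (z := z) (by linarith) 0 Fk.zero_mem
    simpa using this
  obtain ⟨z, hz⟩ := h.exK
  rcases h.C5 with D | D
  · have e := D 0 s0 h.s0F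
    rw [zero_add] at e
    have f1 : cnt A (fun a => a.1 = 0 ∧ a.2.2 ∈ Fk) ≤ cnt A (fun a => a.1 = 0) := by
      have := cnt_add_le (S := A) (P := fun a => a.1 = 0 ∧ a.2.2 ∈ Fk)
        (Q := fun a => a.1 = 0 ∧ a.2.2 ∉ Fk) (R := fun a => a.1 = 0)
        (fun a _ g => g.1) (fun a _ g => g.1) (fun a _ g g' => g'.2 g.2)
      have h0 := cnt_nonneg A (fun a => a.1 = 0 ∧ a.2.2 ∉ Fk)
      linarith
    have y0' : ∀ y w, (s0, y, w) ∈ A → y = 0 := by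
      intro y w ha
      by_cases hw : w ∈ Fk
      · have g : y ∈ Fj := by simpa using h.E3 hE ha (h.a1z hw)
        exact (h.A1 _ g _ hw).1 ha
      · have g : y ∈ Fj := by simpa using h.E3 hE ha (fl w hw)
        by_contra hy
        have e := h.key g hy w
        rw [c0 _ _ hw, c0 _ _ hw] at e
        have e2 : 0 < cnt A (fun a => a.1 = s0 ∧ a.2.1 = y ∧ a.2.2 - w ∈ Fk) :=
          cnt_pos.2 ⟨_, ha, rfl, rfl, by simp⟩
        have e3 : cnt A (fun a => a.1 = s0 ∧ a.2.1 = 0 ∧ a.2.2 - w ∈ Fk) ≤ pk := by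
          rw [← h.cFk, Nat.card_eq_fintype_card, ← Finset.card_univ]
          apply cnt_le (f := fun a => if ha : a.2.2 - w ∈ Fk then (⟨a.2.2 - w, ha⟩ : Fk) else 0)
          · rintro ⟨a, b, c⟩ m1 ⟨a', b', c'⟩ m2 ⟨h3, h4, h5⟩ ⟨h3', h4', h5'⟩ hh
            simp only at h3 h4 h5 h3' h4' h5'
            subst h3 h4 h3' h4'
            simp only [h5, h5', dif_pos, Subtype.mk.injEq, sub_left_inj] at hh
            rw [hh]
          · intros; simp
        linarith
    have f2 : cnt A (fun a => a.1 = s0) ≤ pk ^ 2 := by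
      have : ((pk : ℤ) ^ 2) = ((Finset.univ : Finset K).card : ℤ) := by
        rw [Finset.card_univ, h.cK]; push_cast; ring
      rw [this]
      apply cnt_le (f := fun a => a.2.2)
      · rintro ⟨a, b, c⟩ m1 ⟨a', b', c'⟩ m2 h3 h3' hh
        simp only at h3 h3' hh
        subst h3 h3' hh
        rw [y0' _ _ m1, y0' _ _ m2]
      · intros; simp
    nlinarith
  · have e := D x s0 h.s0F
    have h0 : 0 < cnt B (fun a => a.1 = x + s0) := by
      rw [← e]
      have : (0 : ℤ) < pk * pj := by positivity
      linarith
    obtain ⟨⟨a, b, c⟩, m1, h3⟩ := cnt_pos.1 h0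
    simp only at h3
    subst h3
    obtain ⟨v, -, hb⟩ := c1 0
    have := h.Iall c1 c2 hz (fl z hz) m1 hb (by simpa using h.s0F)
    exact h.s0n (by simpa using this)

/-- the case where `Φ_{p_i^n p_k}` divides `A` -/
lemma caseA (C : ∀ x z, ∀ s ∈ Fi, ∀ t,
      cnt A (fun a => a.1 = x ∧ a.2.2 - z ∈ Fk) - cnt A (fun a => a.1 = x + s ∧ a.2.2 - z ∈ Fk)
      - cnt A (fun a => a.1 = x ∧ a.2.2 - (z + t) ∈ Fk)
      + cnt A (fun a => a.1 = x + s ∧ a.2.2 - (z + t) ∈ Fk) = 0) : False := by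
  classical
  have pjpos : (0 : ℤ) < pj := by exact_mod_cast h.hpj.pos
  have pkpos : (0 : ℤ) < pk := by exact_mod_cast h.hpk.pos
  have hlt : (pk : ℤ) < pj := by exact_mod_cast h.hkj
  have pk2 : (2 : ℤ) ≤ pk := by exact_mod_cast h.hpk.two_le
  have a0 := h.alp0 c1 c2
  have a1 := h.alp1 c1 c2
  have hzlt : ∀ z, cnt A (fun a => a.1 = s0 ∧ a.2.2 - z ∈ Fk) <
      cnt A (fun a => a.1 = 0 ∧ a.2.2 - z ∈ Fk) := by
    intro z
    have e := C 0 0 s0 h.s0F z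
    simp only [zero_add, sub_zero] at e
    nlinarith
  rcases h.C5 with D | D
  · have e := D 0 s0 h.s0F
    rw [zero_add, h.sumK 0, h.sumK s0] at e
    have : ∑ q : K ⧸ Fk, cnt A (fun a => a.1 = s0 ∧ a.2.2 - q.out ∈ Fk) <
      ∑ q : K ⧸ Fk, cnt A (fun a => a.1 = 0 ∧ a.2.2 - q.out ∈ Fk) :=
      Finset.sum_lt_sum_of_nonempty ⟨0, Finset.mem_univ _⟩ (fun q _ => hzlt _)
    linarith
  · obtain ⟨v0, -, hb0⟩ := c1 0
    have hex : ∀ s : Fi, ∃ v w, (x + (s : I), v, w) ∈ B := by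
      intro s
      have e := D x s s.2
      have h0 : 0 < cnt B (fun a => a.1 = x + (s : I)) := by
        rw [← e]; exact cnt_pos.2 ⟨_, hb0, rfl⟩
      obtain ⟨⟨a, b, c⟩, m1, h3⟩ := cnt_pos.1 h0
      simp only at h3
      subst h3
      exact ⟨_, _, m1⟩
    by_cases hc : ∃ z, z ∉ Fk ∧ (s0, (0 : J), z) ∈ A
    · obtain ⟨z, hz, hzA⟩ := hc
      obtain ⟨v, w, hb⟩ := hex ⟨s0, h.s0F⟩
      have := h.Iall c1 c2 hz hzA hb hb0 (by simpa using h.s0F)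
      exact h.s0n (by simpa using this)
    push Not at hc
    choose f g hfg using hex
    have hinj : Function.Injective (fun s : Fi => (QuotientAddGroup.mk (g s) : K ⧸ Fk)) := by
      intro s s' e
      simp only at e
      rw [eq_comm, QuotientAddGroup.eq, ← sub_eq_neg_add] at e
      have := h.Ik c1 c2 (hfg s) (hfg s') (by simpa using Fi.sub_mem s.2 s'.2) e
      exact Subtype.ext (by simpa using this)
    have hle := Nat.card_le_card_of_injective _ hinj
    rw [h.cFi, h.cKq] at hle
    have hlt2 : (pi : ℤ) + 1 ≤ pk := by
      have := h.hik
      have : pi + 1 ≤ pk := by omega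
      exact_mod_cast this
    have hf : ∀ y ∈ Fj, y ≠ 0 → ∀ z, z ∉ Fk → ((0 : I), y, z) ∈ A := by
      intro y hy hy0 z hz
      have e := h.key hy hy0 z
      rw [cnt_zero (S := A) (P := fun a => a.1 = s0 ∧ a.2.1 = 0 ∧ a.2.2 - z ∈ Fk)] at e
      · have e1 := cnt_nonneg A (fun a => a.1 = 0 ∧ a.2.1 = 0 ∧ a.2.2 - z ∈ Fk)
        have e2 := cnt_nonneg A (fun a => a.1 = s0 ∧ a.2.1 = y ∧ a.2.2 - z ∈ Fk)
        have := h.full (x := 0) (y := y) (z := z) (by linarith) 0 Fk.zero_mem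
        simpa using this
      · rintro ⟨a, b, c⟩ m1 ⟨h3, h4, h5⟩
        simp only at h3 h4 h5
        subst h3 h4
        refine hc c (fun hcF => hz ?_) m1
        simpa using Fk.sub_mem hcF h5
    have hbig := le_cnt (S := A) (P := fun a => a.1 = 0 ∧ a.2.2 ∉ Fk)
      (((Finset.univ : Finset J).filter (fun y => y ∈ Fj)).erase 0 ×ˢ
        ((Finset.univ : Finset K).filter (fun z => z ∈ Fk))ᶜ) (fun p => ((0 : I), p.1, p.2))
      (by
        rintro ⟨p, q⟩ - ⟨p', q'⟩ - e
        simpa using e) (by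
        rintro ⟨p, q⟩ hp
        simp only [Finset.mem_product, Finset.mem_erase, Finset.mem_filter, Finset.mem_univ,
          true_and, Finset.mem_compl] at hp
        exact ⟨hf _ hp.1.2 hp.1.1 _ hp.2, rfl, hp.2⟩)
    have hcj : ((Finset.univ : Finset J).filter (fun y => y ∈ Fj)).card = pj := by
      rw [← h.cFj, Nat.card_eq_fintype_card, Fintype.card_subtype]
    have hck : ((Finset.univ : Finset K).filter (fun y => y ∈ Fk)).card = pk := by
      rw [← h.cFk, Nat.card_eq_fintype_card, Fintype.card_subtype]
    rw [Finset.card_product, Finset.card_erase_of_mem (by simp), Finset.card_compl, hcj, hck,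
      h.cK] at hbig
    have hle2 : pk ≤ pk ^ 2 := by have := h.hpk.two_le; nlinarith
    rw [Nat.cast_mul, Nat.cast_sub hle2, Nat.cast_sub h.hpj.one_le] at hbig
    push_cast at hbig
    have hadd := cnt_add_le (S := A) (P := fun a => a.1 = 0 ∧ a.2.2 ∈ Fk)
      (Q := fun a => a.1 = 0 ∧ a.2.2 ∉ Fk) (R := fun a => True)
      (fun a _ g => trivial) (fun a _ g => trivial) (fun a _ g g' => g'.2 g.2)
    have hT : cnt A (fun a => True) = pi * pj * pk := by
      unfold cnt
      rw [Finset.filter_true, h.cA]; push_cast; ring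
    rw [hT] at hadd
    have : (pi : ℤ) * (pj * pk) ≤ (pk - 1) * (pj * pk) := by
      apply mul_le_mul_of_nonneg_right <;> [linarith; positivity]
    nlinarith

end Col

theorem contra : False := by
  obtain ⟨x, k, c1, c2⟩ := h.exCol
  rcases h.C4 with C | C
  · exact h.caseA c1 c2 C
  · exact h.caseB c1 c2 C
end Setup
end Comb
end S18

namespace S18
section Four
variable {M : ℕ} [NeZero M]

/-- the exponential sum of a set -/
noncomputable def SS (A : Finset (ZMod M)) (k : ZMod M) : ℂ := ∑ a ∈ A, ZMod.stdAddChar (a * k)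

lemma SS_eval (A : Finset (ZMod M)) (k : ZMod M) :
    aeval (ZMod.stdAddChar k : ℂ) (maskPoly M A) = SS A k := by
  unfold maskPoly SS
  rw [map_sum]
  apply Finset.sum_congr rfl
  intro a _
  rw [map_pow, aeval_X, ← AddChar.map_nsmul_eq_pow, nsmul_eq_mul, ZMod.natCast_zmod_val]

lemma prim (k : ZMod M) : IsPrimitiveRoot (ZMod.stdAddChar k : ℂ) (addOrderOf k) := by
  constructor
  · rw [← AddChar.map_nsmul_eq_pow, addOrderOf_nsmul_eq_zero, AddChar.map_zero_eq_one]
  · intro l hl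
    rw [← AddChar.map_nsmul_eq_pow, ← AddChar.map_zero_eq_one (ZMod.stdAddChar (N := M))] at hl
    exact addOrderOf_dvd_of_nsmul_eq_zero (ZMod.injective_stdAddChar hl)

lemma cyc_iff (A : Finset (ZMod M)) (k : ZMod M) :
    cycDvd M (addOrderOf k) A ↔ SS A k = 0 := by
  have hp : 0 < addOrderOf k := addOrderOf_pos k
  unfold cycDvd
  rw [cyclotomic_eq_minpoly (prim k) hp, ← SS_eval,
    minpoly.isIntegrallyClosed_dvd_iff ((prim k).isIntegral hp)]

lemma SS_unit (A : Finset (ZMod M)) (k : ZMod M) (r : (ZMod M)ˣ) :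
    SS A (r * k) = 0 ↔ SS A k = 0 := by
  rw [← cyc_iff, ← cyc_iff]
  have : addOrderOf ((r : ZMod M) * k) = addOrderOf k := by
    apply Nat.dvd_antisymm <;> rw [addOrderOf_dvd_iff_nsmul_eq_zero]
    · rw [← mul_smul_comm, addOrderOf_nsmul_eq_zero, mul_zero]
    · have h := addOrderOf_nsmul_eq_zero ((r : ZMod M) * k)
      rw [nsmul_eq_mul] at h ⊢
      have h2 : (r : ZMod M) * ((addOrderOf ((r : ZMod M) * k) : ZMod M) * k) = 0 := by
        rw [← h]; ring
      exact (Units.mul_right_eq_zero r).1 h2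
  rw [this]

lemma sum_char {k : ZMod M} (hk : k ≠ 0) : ∑ x : ZMod M, (ZMod.stdAddChar (x * k) : ℂ) = 0 := by
  have := AddChar.sum_mulShift (R' := ℂ) k (ZMod.isPrimitive_stdAddChar M)
  rw [this, if_neg hk]; simp

lemma SS_tile {A B : Finset (ZMod M)} (ht : IsTiling M (A : Set (ZMod M)) (B : Set (ZMod M)))
    {k : ZMod M} (hk : k ≠ 0) : SS A k = 0 ∨ SS B k = 0 := by
  classical
  rw [← mul_eq_zero, ← sum_char hk]
  unfold SS
  rw [Finset.sum_mul_sum, ← Finset.sum_product']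
  apply Finset.sum_bij (fun p _ => p.1 + p.2)
  · simp
  · rintro ⟨a, b⟩ h1 ⟨a', b'⟩ h2 e
    simp only [Finset.mem_product] at h1 h2
    obtain ⟨p, -, hp⟩ := ht (a + b)
    exact (hp (a, b) ⟨h1.1, h1.2, rfl⟩).trans (hp (a', b') ⟨h2.1, h2.2, e.symm⟩).symm
  · intro z _
    obtain ⟨p, ⟨h1, h2, h3⟩, -⟩ := ht z
    exact ⟨p, by simpa using ⟨h1, h2⟩, h3⟩
  · rintro ⟨a, b⟩ -
    rw [← AddChar.map_add_eq_mul, add_mul]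

lemma exOrd {s : ℕ} (hs : s ∣ M) : ∃ k : ZMod M, addOrderOf k = s := by
  obtain ⟨d, rfl⟩ := hs
  have h0 : s * d ≠ 0 := NeZero.ne _
  have hd : d ≠ 0 := fun e => h0 (by simp [e])
  have hs : s ≠ 0 := fun e => h0 (by simp [e])
  refine ⟨(d : ℕ), ?_⟩
  rw [ZMod.addOrderOf_coe _ h0, Nat.gcd_eq_right (dvd_mul_left _ _),
    Nat.mul_div_cancel _ (Nat.pos_of_ne_zero hd)]

lemma cyc_or {A B : Finset (ZMod M)} (ht : IsTiling M (A : Set (ZMod M)) (B : Set (ZMod M)))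
    {s : ℕ} (hs : s ∣ M) (h1 : s ≠ 1) : cycDvd M s A ∨ cycDvd M s B := by
  obtain ⟨k, rfl⟩ := exOrd hs
  rw [cyc_iff, cyc_iff]
  exact SS_tile ht (fun e => h1 (by simp [e]))

open Classical in
lemma sands0 {A B : Finset (ZMod M)} (ht : IsTiling M (A : Set (ZMod M)) (B : Set (ZMod M)))
    (r : (ZMod M)ˣ) (x : ZMod M) :
    ((A ×ˢ B).filter (fun p => (r : ZMod M) * p.1 + p.2 = x)).card = 1 := by
  have dG : ∀ (r : (ZMod M)ˣ) (k : ZMod M),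
      ZMod.dft (fun x => (((A ×ˢ B).filter (fun p => (r : ZMod M) * p.1 + p.2 = x)).card : ℂ)) k
      = SS A (r * (-k)) * SS B (-k) := by
    intro r k
    rw [ZMod.dft_apply]
    unfold SS
    rw [Finset.sum_mul_sum, ← Finset.sum_product']
    simp only [Finset.card_filter, Nat.cast_sum, smul_eq_mul, Finset.mul_sum]
    rw [Finset.sum_comm]
    apply Finset.sum_congr rfl
    rintro ⟨a, b⟩ -
    rw [Finset.sum_eq_single ((r : ZMod M) * a + b)]
    · simp only [if_true, Nat.cast_one, mul_one]
      rw [← AddChar.map_add_eq_mul]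
      congr 1; ring
    · intro y _ hy
      rw [if_neg (Ne.symm hy)]; simp
    · simp
  have hG : (fun x => (((A ×ˢ B).filter (fun p => (r : ZMod M) * p.1 + p.2 = x)).card : ℂ)) =
      (fun x => (((A ×ˢ B).filter (fun p => ((1 : (ZMod M)ˣ) : ZMod M) * p.1 + p.2 = x)).card : ℂ)) := by
    apply ZMod.dft.injective
    funext k
    rw [dG, dG]
    by_cases hk : k = 0
    · simp [hk]
    · rcases SS_tile ht (neg_ne_zero.2 hk) with e | e
      · rw [(SS_unit A (-k) r).2 e, (SS_unit A (-k) 1).2 e]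
      · rw [e]; simp
  have := congrFun hG x
  simp only [Nat.cast_inj, Units.val_one, one_mul] at this
  rw [this, Finset.card_eq_one]
  obtain ⟨p, ⟨h1, h2, h3⟩, hp⟩ := ht x
  refine ⟨p, ?_⟩
  ext q
  simp only [Finset.mem_filter, Finset.mem_product, Finset.mem_singleton]
  constructor
  · rintro ⟨⟨g1, g2⟩, g3⟩
    exact hp q ⟨g1, g2, g3⟩
  · rintro rfl
    exact ⟨⟨h1, h2⟩, h3⟩

lemma sandsZ {A B : Finset (ZMod M)} (ht : IsTiling M (A : Set (ZMod M)) (B : Set (ZMod M)))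
    (r : (ZMod M)ˣ) {a a' b b' : ZMod M} (ha : a ∈ A) (ha' : a' ∈ A) (hb : b ∈ B) (hb' : b' ∈ B)
    (e : (r : ZMod M) * (a - a') = b - b') : b = b' := by
  classical
  have h1 := sands0 ht r (r * a + b')
  obtain ⟨p, hp⟩ := Finset.card_eq_one.1 h1
  have m1 : (a, b') ∈ ({p} : Finset (ZMod M × ZMod M)) := by
    rw [← hp]; simp [ha, hb']
  have m2 : (a', b) ∈ ({p} : Finset (ZMod M × ZMod M)) := by
    rw [← hp]
    simp only [Finset.mem_filter, Finset.mem_product, ha', hb, and_self, true_and]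
    linear_combination -e
  rw [Finset.mem_singleton] at m1 m2
  exact (congrArg Prod.snd (m2.trans m1.symm))

/-- the difference operator -/
def DD (h : ZMod M) (f : ZMod M → ℂ) : ZMod M → ℂ := fun x => f x - f (x + h)

lemma dft_DD (h : ZMod M) (f : ZMod M → ℂ) (k : ZMod M) :
    ZMod.dft (DD h f) k = (1 - ZMod.stdAddChar (h * k)) * ZMod.dft f k := by
  have e : ∑ x : ZMod M, (ZMod.stdAddChar (-(x * k)) : ℂ) • f (x + h) =
      ZMod.stdAddChar (h * k) * ∑ x : ZMod M, (ZMod.stdAddChar (-(x * k)) : ℂ) • f x := by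
    rw [Finset.mul_sum]
    apply Fintype.sum_equiv (Equiv.addRight h)
    intro x
    simp only [smul_eq_mul, Equiv.coe_addRight]
    rw [← mul_assoc, ← AddChar.map_add_eq_mul]
    congr 2; ring
  rw [ZMod.dft_apply, ZMod.dft_apply]
  unfold DD
  simp only [smul_sub, Finset.sum_sub_distrib]
  rw [e]; ring

open Classical in
/-- the number of elements of `A` which agree with `x` modulo `N` -/
noncomputable def fN (A : Finset (ZMod M)) (N : ℕ) (x : ZMod M) : ℤ :=
  ((A.filter (fun a => (N : ZMod M) ∣ a - x)).card : ℤ)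

lemma dft_fN (A : Finset (ZMod M)) (N : ℕ) (k : ZMod M) (hA : SS A (-k) = 0) :
    ZMod.dft (fun x => (fN A N x : ℂ)) k = 0 := by
  classical
  have : ZMod.dft (fun x => (fN A N x : ℂ)) k = SS A (-k) * ∑ y : ZMod M,
      if (N : ZMod M) ∣ y then (ZMod.stdAddChar (y * k) : ℂ) else 0 := by
    rw [ZMod.dft_apply]
    unfold SS fN
    simp only [Finset.card_filter, smul_eq_mul, Finset.sum_mul]
    push_cast
    simp only [Finset.mul_sum]
    rw [Finset.sum_comm]
    apply Finset.sum_congr rfl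
    intro a _
    apply Fintype.sum_equiv (Equiv.subLeft a)
    intro x
    simp only [Equiv.subLeft_apply, mul_ite, mul_one, mul_zero]
    split_ifs with hd
    · rw [← AddChar.map_add_eq_mul]; congr 1; ring
    · rfl
  rw [this, hA, zero_mul]

lemma alt (A : Finset (ZMod M)) (N : ℕ) (hA : cycDvd M N A) (hs : List (ZMod M))
    (hh : ∀ p, p.Prime → p ∣ N → ∃ h ∈ hs, ((N / p : ℕ) : ZMod M) ∣ h) :
    hs.foldr DD (fun x => (fN A N x : ℂ)) = 0 := by
  classical
  apply ZMod.dft.injective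
  rw [map_zero]
  funext k
  have hprod : ∀ l : List (ZMod M), ZMod.dft (l.foldr DD (fun x => (fN A N x : ℂ))) k =
      (l.map (fun h => 1 - (ZMod.stdAddChar (h * k) : ℂ))).prod *
        ZMod.dft (fun x => (fN A N x : ℂ)) k := by
    intro l
    induction l with
    | nil => simp
    | cons a l ih => rw [List.foldr_cons, dft_DD, ih, List.map_cons, List.prod_cons, mul_assoc]
  rw [hprod, Pi.zero_apply, mul_eq_zero]
  by_cases hNk : (N : ZMod M) * k = 0
  · have hd : addOrderOf k ∣ N := by
      rw [addOrderOf_dvd_iff_nsmul_eq_zero, nsmul_eq_mul, hNk]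
    obtain ⟨c, hc⟩ := hd
    by_cases hc1 : c = 1
    · right
      apply dft_fN
      rw [← cyc_iff, addOrderOf_neg]
      rw [hc1, mul_one] at hc
      rwa [← hc]
    · left
      obtain ⟨p, hp, hpc⟩ := Nat.exists_prime_and_dvd hc1
      obtain ⟨c', rfl⟩ := hpc
      obtain ⟨h, hmem, hdiv⟩ := hh p hp (by rw [hc]; exact ⟨addOrderOf k * c', by ring⟩)
      rw [List.prod_eq_zero_iff, List.mem_map]
      refine ⟨h, hmem, ?_⟩
      obtain ⟨w, rfl⟩ := hdiv
      have e : N / p = c' * addOrderOf k := by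
        rw [hc]
        apply Nat.div_eq_of_eq_mul_right hp.pos; ring
      have e2 : ((addOrderOf k : ℕ) : ZMod M) * k = 0 := by
        rw [← nsmul_eq_mul, addOrderOf_nsmul_eq_zero]
      have e3 : ((N / p : ℕ) : ZMod M) * w * k = 0 := by
        rw [e]; push_cast
        linear_combination (c' : ZMod M) * w * e2
      rw [e3, AddChar.map_zero_eq_one, sub_self]
  · right
    have e : DD (N : ZMod M) (fun x => (fN A N x : ℂ)) = 0 := by
      funext x
      unfold DD fN
      have : ∀ a : ZMod M, (N : ZMod M) ∣ a - (x + N) ↔ (N : ZMod M) ∣ a - x := by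
        intro a
        rw [← sub_sub, dvd_sub_self_right]
      simp only [this, sub_self, Pi.zero_apply]
    have e2 := dft_DD (N : ZMod M) (fun x => (fN A N x : ℂ)) k
    rw [e, map_zero, Pi.zero_apply, eq_comm, mul_eq_zero] at e2
    rcases e2 with e2 | e2
    · exfalso
      apply hNk
      apply ZMod.injective_stdAddChar
      rw [AddChar.map_zero_eq_one]
      exact (sub_eq_zero.1 e2).symm
    · exact e2

lemma alt1 (A : Finset (ZMod M)) (N : ℕ) (hA : cycDvd M N A) (s : ZMod M)
    (hh : ∀ p, p.Prime → p ∣ N → ((N / p : ℕ) : ZMod M) ∣ s) (x : ZMod M) :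
    fN A N x - fN A N (x + s) = 0 := by
  have := congrFun (alt A N hA [s] (fun p h1 h2 => ⟨s, by simp, hh p h1 h2⟩)) x
  simp only [List.foldr_cons, List.foldr_nil, DD, Pi.zero_apply] at this
  exact_mod_cast this

lemma alt2 (A : Finset (ZMod M)) (N : ℕ) (hA : cycDvd M N A) (s t : ZMod M)
    (hh : ∀ p, p.Prime → p ∣ N → ((N / p : ℕ) : ZMod M) ∣ s ∨ ((N / p : ℕ) : ZMod M) ∣ t)
    (x : ZMod M) :
    fN A N x - fN A N (x + s) - fN A N (x + t) + fN A N (x + s + t) = 0 := by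
  have := congrFun (alt A N hA [s, t] (fun p h1 h2 => by simpa using hh p h1 h2)) x
  simp only [List.foldr_cons, List.foldr_nil, DD, Pi.zero_apply] at this
  have h2 : fN A N x - fN A N (x + t) - (fN A N (x + s) - fN A N (x + s + t)) = 0 := by
    exact_mod_cast this
  linarith

lemma alt3 (A : Finset (ZMod M)) (N : ℕ) (hA : cycDvd M N A) (s u t : ZMod M)
    (hh : ∀ p, p.Prime → p ∣ N → ((N / p : ℕ) : ZMod M) ∣ s ∨ ((N / p : ℕ) : ZMod M) ∣ u ∨
      ((N / p : ℕ) : ZMod M) ∣ t) (x : ZMod M) :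
    fN A N x - fN A N (x + s) - fN A N (x + u) - fN A N (x + t) + fN A N (x + s + u)
      + fN A N (x + s + t) + fN A N (x + u + t) - fN A N (x + s + u + t) = 0 := by
  have := congrFun (alt A N hA [s, u, t] (fun p h1 h2 => by simpa using hh p h1 h2)) x
  simp only [List.foldr_cons, List.foldr_nil, DD, Pi.zero_apply] at this
  have h2 : fN A N x - fN A N (x + t) - (fN A N (x + u) - fN A N (x + u + t))
      - (fN A N (x + s) - fN A N (x + s + t) - (fN A N (x + s + u) - fN A N (x + s + u + t))) = 0 := by
    exact_mod_cast this
  linarith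

end Four
end S18

namespace S18
section Loc
variable {p n : ℕ}

/-- The subgroup of multiples of `p ^ m` in `ZMod (p ^ n)`. -/
def FF (p n m : ℕ) : AddSubgroup (ZMod (p ^ n)) where
  carrier := {x | ((p ^ m : ℕ) : ZMod (p ^ n)) ∣ x}
  add_mem' := fun h1 h2 => dvd_add h1 h2
  zero_mem' := dvd_zero _
  neg_mem' := fun h => (dvd_neg).2 h

lemma mem_FF {m : ℕ} {x : ZMod (p ^ n)} : x ∈ FF p n m ↔ ((p ^ m : ℕ) : ZMod (p ^ n)) ∣ x :=
  Iff.rfl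

lemma card_FF (hp : p.Prime) (hn : 1 ≤ n) : Nat.card (FF p n (n - 1)) = p := by
  have : NeZero (p ^ n) := ⟨pow_ne_zero _ hp.ne_zero⟩
  have e : FF p n (n - 1) = AddSubgroup.zmultiples ((p ^ (n - 1) : ℕ) : ZMod (p ^ n)) := by
    ext x
    rw [mem_FF, AddSubgroup.mem_zmultiples_iff]
    constructor
    · rintro ⟨c, rfl⟩
      refine ⟨c.val, ?_⟩
      rw [zsmul_eq_mul, Int.cast_natCast, ZMod.natCast_zmod_val, mul_comm]
    · rintro ⟨k, rfl⟩
      rw [zsmul_eq_mul]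
      exact dvd_mul_left _ _
  rw [e, Nat.card_zmultiples, ZMod.addOrderOf_coe _ (NeZero.ne _),
    Nat.gcd_eq_right (pow_dvd_pow _ (Nat.sub_le _ _))]
  apply Nat.div_eq_of_eq_mul_right (pow_pos hp.pos _)
  rw [← pow_succ]; congr 1; omega

lemma unit_iff (hp : p.Prime) (hn : 1 ≤ n) (c : ZMod (p ^ n)) :
    IsUnit c ↔ ¬ (p : ZMod (p ^ n)) ∣ c := by
  have : NeZero (p ^ n) := ⟨pow_ne_zero _ hp.ne_zero⟩
  have hn' : n ≠ 0 := by omega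
  constructor
  · intro hu hd
    have := isUnit_of_dvd_unit hd hu
    rw [ZMod.isUnit_iff_coprime, Nat.coprime_pow_right_iff (by omega), Nat.coprime_self] at this
    exact hp.one_lt.ne' this
  · intro hd
    rw [← ZMod.natCast_zmod_val c, ZMod.isUnit_iff_coprime]
    apply Nat.Coprime.pow_right
    rw [Nat.coprime_comm, Nat.Prime.coprime_iff_not_dvd hp]
    intro hc
    apply hd
    rw [← ZMod.natCast_zmod_val c]
    exact_mod_cast Nat.cast_dvd_cast (α := ZMod (p ^ n)) hc

lemma pn0 : (p : ZMod (p ^ n)) ^ n = 0 := by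
  have := ZMod.natCast_self (p ^ n)
  rwa [Nat.cast_pow] at this

lemma unit_F (hp : p.Prime) (hn : 1 ≤ n) {x y : ZMod (p ^ n)} (hx : x ≠ 0) (hy : y ≠ 0)
    (hxF : x ∈ FF p n (n - 1)) (hyF : y ∈ FF p n (n - 1)) :
    ∃ r : (ZMod (p ^ n))ˣ, (r : ZMod (p ^ n)) * x = y := by
  obtain ⟨c, rfl⟩ := hxF
  obtain ⟨d, rfl⟩ := hyF
  have aux : ∀ c : ZMod (p ^ n), ((p ^ (n - 1) : ℕ) : ZMod (p ^ n)) * c ≠ 0 → IsUnit c := by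
    intro c hc
    rw [unit_iff hp hn]
    rintro ⟨w, rfl⟩
    apply hc
    rw [← mul_assoc, Nat.cast_pow, ← pow_succ, Nat.sub_add_cancel hn, pn0, zero_mul]
  obtain ⟨c, rfl⟩ := aux c hx
  obtain ⟨d, rfl⟩ := aux d hy
  refine ⟨d * c⁻¹, ?_⟩
  rw [Units.val_mul]
  have := c.inv_mul
  linear_combination ((p ^ (n - 1) : ℕ) : ZMod (p ^ n)) * (d : ZMod (p ^ n)) * this

lemma unit_tyJ (hp : p.Prime) {x y : ZMod (p ^ 2)} (T : tyJ (FF p 2 1) x y) :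
    ∃ r : (ZMod (p ^ 2))ˣ, (r : ZMod (p ^ 2)) * x = y := by
  rcases T with ⟨rfl, rfl⟩ | ⟨h1, h2, h3, h4⟩ | ⟨h1, h2⟩
  · exact ⟨1, by simp⟩
  · exact unit_F hp (by norm_num) h1 h2 h3 h4
  · rw [mem_FF, pow_one, ← unit_iff hp (by norm_num)] at h1 h2
    obtain ⟨c, rfl⟩ := h1
    obtain ⟨d, rfl⟩ := h2
    exact ⟨d * c⁻¹, by simp⟩

lemma unit_tyI (hp : p.Prime) (hn : 1 ≤ n) {x y : ZMod (p ^ n)} (T : tyI (FF p n (n - 1)) x y) :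
    ∃ r : (ZMod (p ^ n))ˣ, (r : ZMod (p ^ n)) * x = y := by
  have : NeZero (p ^ n) := ⟨pow_ne_zero _ hp.ne_zero⟩
  rcases T with ⟨rfl, rfl⟩ | ⟨h1, h2, h3, h4⟩ | ⟨h1, h2, h3⟩
  · exact ⟨1, by simp⟩
  · exact unit_F hp hn h1 h2 h3 h4
  · have hx0 : x.val ≠ 0 := by
      intro e
      rw [ZMod.val_eq_zero] at e
      exact h1 (by rw [e]; exact (FF p n (n - 1)).zero_mem)
    obtain ⟨v, m, hm, hv⟩ := Nat.exists_eq_pow_mul_and_not_dvd hx0 p hp.one_lt.ne'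
    have hx : x = (p : ZMod (p ^ n)) ^ v * m := by
      rw [← ZMod.natCast_zmod_val x, hv]; push_cast; ring
    have hvn : v < n - 1 := by
      by_contra hc
      push Not at hc
      apply h1
      rw [mem_FF, hx, Nat.cast_pow]
      exact Dvd.dvd.mul_right (pow_dvd_pow _ hc) _
    have hmu : IsUnit (m : ZMod (p ^ n)) := by
      rw [ZMod.isUnit_iff_coprime]
      apply Nat.Coprime.pow_right
      rw [Nat.coprime_comm, Nat.Prime.coprime_iff_not_dvd hp]
      exact hm
    obtain ⟨d, hd⟩ := h3
    obtain ⟨w, rfl⟩ : ∃ w, n = v + 1 + w + 1 := ⟨n - 1 - v - 1, by omega⟩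
    have hu : IsUnit (-(m : ZMod (p ^ (v + 1 + w + 1))) + p * (p ^ w * d)) := by
      rw [unit_iff hp hn]
      intro hc
      have h5 : (p : ZMod (p ^ (v + 1 + w + 1))) ∣ m := by
        have := dvd_sub (dvd_mul_right (p : ZMod (p ^ (v + 1 + w + 1))) (p ^ w * d)) hc
        simpa using this
      exact (unit_iff hp hn _).1 hmu h5
    obtain ⟨c, hc⟩ := hmu
    obtain ⟨q, hq⟩ := hu
    refine ⟨q * c⁻¹, ?_⟩
    rw [Units.val_mul, hx, hq, ← hc]
    have e1 := c.inv_mul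
    have e2 : y = -((p : ZMod (p ^ (v + 1 + w + 1))) ^ v * c) + p ^ (v + 1 + w) * d := by
      rw [hc, ← hx]
      rw [Nat.add_sub_cancel, Nat.cast_pow] at hd
      linear_combination hd
    rw [e2]
    linear_combination (-(c : ZMod (p ^ (v + 1 + w + 1))) + p * (p ^ w * d)) * p ^ v * e1

end Loc

section Gcd
variable {M : ℕ} [NeZero M]

lemma natdvd {N : ℕ} (hN : N ∣ M) (x : ZMod M) : (N : ZMod M) ∣ x ↔ N ∣ x.val := by
  constructor
  · rintro ⟨c, rfl⟩
    rw [ZMod.val_mul]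
    rw [Nat.dvd_mod_iff hN]
    apply Dvd.dvd.mul_right
    rw [ZMod.val_natCast, Nat.dvd_mod_iff hN]
  · intro h
    rw [← ZMod.natCast_zmod_val x]
    exact_mod_cast Nat.cast_dvd_cast (α := ZMod M) h

lemma gcd_lem {N q q' : ℕ} (hq : q.Prime) (hq' : q'.Prime) (hne : q ≠ q') (hM : M = N * q * q')
    {y z : ZMod M} (hy : ((N * q' : ℕ) : ZMod M) ∣ y) (hz : ((N * q : ℕ) : ZMod M) ∣ z)
    (hy0 : y ≠ 0) (hz0 : z ≠ 0) : Nat.gcd (y + z).val M = N := by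
  have d1 : N * q' ∣ M := ⟨q, by rw [hM]; ring⟩
  have d2 : N * q ∣ M := ⟨q', by rw [hM]⟩
  have dN : N ∣ M := ⟨q * q', by rw [hM]; ring⟩
  have zero : ∀ w : ZMod M, ((N * q' : ℕ) : ZMod M) ∣ w → ((N * q : ℕ) : ZMod M) ∣ w → w = 0 := by
    intro w h1 h2
    rw [natdvd d1] at h1
    rw [natdvd d2] at h2
    have hN0 : 0 < N := by
      rcases Nat.eq_zero_or_pos N with e | e
      · exact absurd (by rw [hM, e]; simp) (NeZero.ne M)
      · exact e
    have : M ∣ w.val := by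
      obtain ⟨t, ht⟩ := dvd_trans (dvd_mul_right N q) h2
      rw [ht] at h1 h2 ⊢
      rw [hM, mul_assoc]
      apply mul_dvd_mul_left
      exact Nat.Coprime.mul_dvd_of_dvd_of_dvd ((Nat.coprime_primes hq hq').2 hne)
        (Nat.dvd_of_mul_dvd_mul_left hN0 h2) (Nat.dvd_of_mul_dvd_mul_left hN0 h1)
    rw [← ZMod.val_eq_zero]
    exact Nat.eq_zero_of_dvd_of_lt this (ZMod.val_lt w)
  have hNy : (N : ZMod M) ∣ y := dvd_trans ⟨(q' : ZMod M), by push_cast; ring⟩ hy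
  have hNz : (N : ZMod M) ∣ z := dvd_trans ⟨(q : ZMod M), by push_cast; ring⟩ hz
  have hg : N ∣ Nat.gcd (y + z).val M := Nat.dvd_gcd ((natdvd dN _).1 (dvd_add hNy hNz)) dN
  obtain ⟨d, hd⟩ := hg
  have hN0 : 0 < N := by
    rcases Nat.eq_zero_or_pos N with e | e
    · exact absurd (by rw [hM, e]; simp) (NeZero.ne M)
    · exact e
  have hdd : d ∣ q * q' := by
    apply Nat.dvd_of_mul_dvd_mul_left hN0
    rw [← hd, ← mul_assoc, ← hM]
    exact Nat.gcd_dvd_right _ _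
  have hgx : N * d ∣ (y + z).val := hd ▸ Nat.gcd_dvd_left _ _
  have hqd : ¬ q ∣ d := by
    intro hc
    have h1 : ((N * q : ℕ) : ZMod M) ∣ y + z :=
      (natdvd d2 _).2 (dvd_trans (mul_dvd_mul_left N hc) hgx)
    have h2 : ((N * q : ℕ) : ZMod M) ∣ y := by simpa using dvd_sub h1 hz
    exact hy0 (zero y hy h2)
  have hqd' : ¬ q' ∣ d := by
    intro hc
    have h1 : ((N * q' : ℕ) : ZMod M) ∣ y + z :=
      (natdvd d1 _).2 (dvd_trans (mul_dvd_mul_left N hc) hgx)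
    have h2 : ((N * q' : ℕ) : ZMod M) ∣ z := by simpa using dvd_sub h1 hy
    exact hz0 (zero z h2 hz)
  have hd1 : d = 1 := by
    apply Nat.eq_one_of_dvd_one
    have c1 : Nat.Coprime d q := (Nat.coprime_comm.1 ((Nat.Prime.coprime_iff_not_dvd hq).2 hqd))
    have c2 : Nat.Coprime d q' := (Nat.coprime_comm.1 ((Nat.Prime.coprime_iff_not_dvd hq').2 hqd'))
    exact c2.dvd_of_dvd_mul_left (by rw [mul_one]; exact c1.dvd_of_dvd_mul_left hdd)
  rw [hd, hd1, mul_one]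

/-- Description of `A` near the base point of a fibered grid. -/
lemma corner {N q q' : ℕ} (hq : q.Prime) (hq' : q'.Prime) (hne : q ≠ q') (hM : M = N * q * q')
    (A : Finset (ZMod M)) {a : ZMod M} (ha : a ∈ A)
    (hf : Fibered M q ((A : Set (ZMod M)) ∩ gridSet M a N))
    (hno : ∀ a' ∈ A, Nat.gcd (a' - a).val M ≠ N) {y z : ZMod M}
    (hy : ((N * q' : ℕ) : ZMod M) ∣ y) (hz : ((N * q : ℕ) : ZMod M) ∣ z) :
    a + (y + z) ∈ A ↔ z = 0 := by
  have hMq : M / q = N * q' := by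
    apply Nat.div_eq_of_eq_mul_right hq.pos; rw [hM]; ring
  have hNy : (N : ZMod M) ∣ y := dvd_trans ⟨(q' : ZMod M), by push_cast; ring⟩ hy
  have hNz : (N : ZMod M) ∣ z := dvd_trans ⟨(q : ZMod M), by push_cast; ring⟩ hz
  have mv : ∀ w w' : ZMod M, (N : ZMod M) ∣ w → a + w ∈ A → ((N * q' : ℕ) : ZMod M) ∣ w' →
      a + w + w' ∈ A := by
    intro w w' h1 h2 h3
    have h4 := hf (a + w) ⟨h2, by unfold gridSet; simpa using h1⟩
    have h5 : a + w + w' ∈ gridSet M (a + w) (M / q) := by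
      unfold gridSet; rw [hMq]; simpa using h3
    exact (h4 h5).1
  constructor
  · intro h
    by_contra hz0
    have h1 := mv (y + z) (-y) (dvd_add hNy hNz) h ((dvd_neg).2 hy)
    have e : a + (y + z) + -y = a + z := by ring
    rw [e] at h1
    have h2 := mv z ((N * q' : ℕ) : ZMod M) hNz h1 dvd_rfl
    apply hno _ h2
    have e : a + z + ((N * q' : ℕ) : ZMod M) - a = ((N * q' : ℕ) : ZMod M) + z := by ring
    rw [e]
    apply gcd_lem hq hq' hne hM dvd_rfl hz _ hz0
    intro h0
    rw [ZMod.natCast_eq_zero_iff] at h0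
    have hpos : 0 < N * q' := by
      rcases Nat.eq_zero_or_pos (N * q') with e | e
      · exact absurd (by rw [hM, mul_right_comm, e]; simp) (NeZero.ne M)
      · exact e
    have := Nat.le_of_dvd hpos h0
    rw [hM, mul_right_comm] at this
    have := hq.two_le
    nlinarith
  · rintro rfl
    have := mv 0 y (dvd_zero _) (by simpa using ha) hy
    simpa using this

end Gcd
end S18

namespace S18
section Trans
variable {pi pj pk ni M : ℕ}

lemma exEquiv (hpi : pi.Prime) (hpj : pj.Prime) (hpk : pk.Prime)
    (hij : pi ≠ pj) (hik : pi ≠ pk) (hjk : pj ≠ pk) (hM : M = pi ^ ni * pj ^ 2 * pk ^ 2) :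
    Nonempty (ZMod M ≃+* ZMod (pi ^ ni) × ZMod (pj ^ 2) × ZMod (pk ^ 2)) := by
  have c1 : Nat.Coprime (pi ^ ni) (pj ^ 2 * pk ^ 2) :=
    Nat.Coprime.mul_right (Nat.coprime_pow_primes _ _ hpi hpj hij)
      (Nat.coprime_pow_primes _ _ hpi hpk hik)
  have c2 : Nat.Coprime (pj ^ 2) (pk ^ 2) := Nat.coprime_pow_primes _ _ hpj hpk hjk
  exact ⟨(ZMod.ringEquivCongr (hM.trans (mul_assoc _ _ _))).trans ((ZMod.chineseRemainder c1).trans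
    ((RingEquiv.refl _).prodCongr (ZMod.chineseRemainder c2)))⟩

lemma dvd_loc {p n m c N : ℕ} (hN : N = p ^ m * c) (hc : Nat.Coprime c p) (x : ZMod (p ^ n)) :
    (N : ZMod (p ^ n)) ∣ x ↔ ((p ^ m : ℕ) : ZMod (p ^ n)) ∣ x := by
  rw [hN, Nat.cast_mul]
  apply IsUnit.mul_right_dvd
  rw [ZMod.isUnit_iff_coprime]
  exact hc.pow_right _

lemma dvd_iff (hpi : pi.Prime) (hpj : pj.Prime) (hpk : pk.Prime)
    (hij : pi ≠ pj) (hik : pi ≠ pk) (hjk : pj ≠ pk)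
    (e : ZMod M ≃+* ZMod (pi ^ ni) × ZMod (pj ^ 2) × ZMod (pk ^ 2)) (α β γ : ℕ) (w : ZMod M) :
    ((pi ^ α * pj ^ β * pk ^ γ : ℕ) : ZMod M) ∣ w ↔
      ((pi ^ α : ℕ) : ZMod (pi ^ ni)) ∣ (e w).1 ∧ ((pj ^ β : ℕ) : ZMod (pj ^ 2)) ∣ (e w).2.1 ∧
      ((pk ^ γ : ℕ) : ZMod (pk ^ 2)) ∣ (e w).2.2 := by
  have cij := (Nat.coprime_primes hpi hpj).2 hij
  have cik := (Nat.coprime_primes hpi hpk).2 hik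
  have cjk := (Nat.coprime_primes hpj hpk).2 hjk
  rw [← map_dvd_iff e, map_natCast, prod_dvd_iff, prod_dvd_iff]
  simp only [Prod.fst_natCast, Prod.snd_natCast]
  rw [dvd_loc (p := pi) (m := α) (c := pj ^ β * pk ^ γ) (by ring)
      (Nat.Coprime.mul_left (cij.symm.pow_left _) (cik.symm.pow_left _)),
    dvd_loc (p := pj) (m := β) (c := pi ^ α * pk ^ γ) (by ring)
      (Nat.Coprime.mul_left (cij.pow_left _) (cjk.symm.pow_left _)),
    dvd_loc (p := pk) (m := γ) (c := pi ^ α * pj ^ β) (by ring)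
      (Nat.Coprime.mul_left (cik.pow_left _) (cjk.pow_left _))]

/-- the image of a set in coordinates, with base point `c` -/
def img (e : ZMod M ≃+* ZMod (pi ^ ni) × ZMod (pj ^ 2) × ZMod (pk ^ 2)) (A : Finset (ZMod M))
    (c : ZMod M) : Finset (ZMod (pi ^ ni) × ZMod (pj ^ 2) × ZMod (pk ^ 2)) :=
  A.map ((Equiv.subRight c).trans e.toEquiv).toEmbedding

lemma mem_img {e : ZMod M ≃+* ZMod (pi ^ ni) × ZMod (pj ^ 2) × ZMod (pk ^ 2)}
    {A : Finset (ZMod M)} {c : ZMod M} {q} : q ∈ img e A c ↔ c + e.symm q ∈ A := by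
  unfold img
  simp only [Finset.mem_map_equiv]
  rw [add_comm]; rfl

lemma sh (e : ZMod M ≃+* ZMod (pi ^ ni) × ZMod (pj ^ 2) × ZMod (pk ^ 2)) (x s : ZMod (pi ^ ni)) (y u : ZMod (pj ^ 2)) (z t : ZMod (pk ^ 2)) (c : ZMod M) :
    e.symm (x, y, z) + c + e.symm (s, u, t) = e.symm (x + s, y + u, z + t) + c := by
  rw [add_right_comm, ← map_add]; rfl

section G
variable [NeZero M] (hpi : pi.Prime) (hpj : pj.Prime) (hpk : pk.Prime)
    (hij : pi ≠ pj) (hik : pi ≠ pk) (hjk : pj ≠ pk)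
    (e : ZMod M ≃+* ZMod (pi ^ ni) × ZMod (pj ^ 2) × ZMod (pk ^ 2))
include hpi hpj hpk hij hik hjk

lemma cntN (A : Finset (ZMod M)) (c : ZMod M) (α β γ : ℕ) (x y z) :
    cnt (img e A c) (fun a => ((pi ^ α : ℕ) : ZMod (pi ^ ni)) ∣ a.1 - x ∧
      ((pj ^ β : ℕ) : ZMod (pj ^ 2)) ∣ a.2.1 - y ∧ ((pk ^ γ : ℕ) : ZMod (pk ^ 2)) ∣ a.2.2 - z)
    = fN A (pi ^ α * pj ^ β * pk ^ γ) (e.symm (x, y, z) + c) := by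
  unfold cnt fN
  rw [Nat.cast_inj]
  symm
  apply Finset.card_equiv ((Equiv.subRight c).trans e.toEquiv)
  intro w
  have hw : ((Equiv.subRight c).trans e.toEquiv) w = e (w - c) := rfl
  simp only [Finset.mem_filter]
  rw [hw, mem_img, RingEquiv.symm_apply_apply, add_sub_cancel]
  apply and_congr_right
  intro _
  rw [dvd_iff hpi hpj hpk hij hik hjk e]
  have : e (w - (e.symm (x, y, z) + c)) = e (w - c) - (x, y, z) := by
    rw [add_comm, ← sub_sub, map_sub, RingEquiv.apply_symm_apply]
  rw [this]
  rfl

lemma hcond {α β γ : ℕ} {s : ZMod (pi ^ ni)} {u : ZMod (pj ^ 2)} {t : ZMod (pk ^ 2)}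
    (hs : α ≠ 0 → ((pi ^ (α - 1) : ℕ) : ZMod (pi ^ ni)) ∣ s)
    (hu : β ≠ 0 → ((pj ^ (β - 1) : ℕ) : ZMod (pj ^ 2)) ∣ u)
    (ht : γ ≠ 0 → ((pk ^ (γ - 1) : ℕ) : ZMod (pk ^ 2)) ∣ t) (p : ℕ) (hp : p.Prime)
    (hd : p ∣ pi ^ α * pj ^ β * pk ^ γ) :
    (α ≠ 0 ∧ ((pi ^ α * pj ^ β * pk ^ γ / p : ℕ) : ZMod M) ∣ e.symm (s, 0, 0)) ∨
    (β ≠ 0 ∧ ((pi ^ α * pj ^ β * pk ^ γ / p : ℕ) : ZMod M) ∣ e.symm (0, u, 0)) ∨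
    (γ ≠ 0 ∧ ((pi ^ α * pj ^ β * pk ^ γ / p : ℕ) : ZMod M) ∣ e.symm (0, 0, t)) := by
  have aux : ∀ {q m : ℕ}, q.Prime → p ∣ q ^ m → p = q ∧ m ≠ 0 := by
    intro q m hq h
    refine ⟨(Nat.prime_dvd_prime_iff_eq hp hq).1 (hp.dvd_of_dvd_pow h), ?_⟩
    rintro rfl
    exact hp.one_lt.ne' (by simpa using h)
  rw [hp.dvd_mul, hp.dvd_mul] at hd
  rcases hd with (hd | hd) | hd
  · obtain ⟨rfl, h0⟩ := aux hpi hd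
    refine Or.inl ⟨h0, ?_⟩
    have : p ^ α * pj ^ β * pk ^ γ / p = p ^ (α - 1) * pj ^ β * pk ^ γ := by
      apply Nat.div_eq_of_eq_mul_right hp.pos
      obtain ⟨m, rfl⟩ := Nat.exists_eq_succ_of_ne_zero h0
      simp only [Nat.succ_eq_add_one, Nat.add_sub_cancel, pow_succ]; ring
    rw [this, dvd_iff hpi hpj hpk hij hik hjk e, RingEquiv.apply_symm_apply]
    exact ⟨hs h0, dvd_zero _, dvd_zero _⟩
  · obtain ⟨rfl, h0⟩ := aux hpj hd
    refine Or.inr (Or.inl ⟨h0, ?_⟩)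
    have : pi ^ α * p ^ β * pk ^ γ / p = pi ^ α * p ^ (β - 1) * pk ^ γ := by
      apply Nat.div_eq_of_eq_mul_right hp.pos
      obtain ⟨m, rfl⟩ := Nat.exists_eq_succ_of_ne_zero h0
      simp only [Nat.succ_eq_add_one, Nat.add_sub_cancel, pow_succ]; ring
    rw [this, dvd_iff hpi hpj hpk hij hik hjk e, RingEquiv.apply_symm_apply]
    exact ⟨dvd_zero _, hu h0, dvd_zero _⟩
  · obtain ⟨rfl, h0⟩ := aux hpk hd
    refine Or.inr (Or.inr ⟨h0, ?_⟩)
    have : pi ^ α * pj ^ β * p ^ γ / p = pi ^ α * pj ^ β * p ^ (γ - 1) := by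
      apply Nat.div_eq_of_eq_mul_right hp.pos
      obtain ⟨m, rfl⟩ := Nat.exists_eq_succ_of_ne_zero h0
      simp only [Nat.succ_eq_add_one, Nat.add_sub_cancel, pow_succ]; ring
    rw [this, dvd_iff hpi hpj hpk hij hik hjk e, RingEquiv.apply_symm_apply]
    exact ⟨dvd_zero _, dvd_zero _, ht h0⟩

lemma G3 (A : Finset (ZMod M)) (c : ZMod M) {α β γ : ℕ}
    (hA : cycDvd M (pi ^ α * pj ^ β * pk ^ γ) A)
    {s : ZMod (pi ^ ni)} {u : ZMod (pj ^ 2)} {t : ZMod (pk ^ 2)}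
    (hs : α ≠ 0 → ((pi ^ (α - 1) : ℕ) : ZMod (pi ^ ni)) ∣ s)
    (hu : β ≠ 0 → ((pj ^ (β - 1) : ℕ) : ZMod (pj ^ 2)) ∣ u)
    (ht : γ ≠ 0 → ((pk ^ (γ - 1) : ℕ) : ZMod (pk ^ 2)) ∣ t) (x y z)
    (W : ZMod (pi ^ ni) → ZMod (pj ^ 2) → ZMod (pk ^ 2) → ℤ)
    (hW : ∀ x y z, W x y z = cnt (img e A c) (fun a => ((pi ^ α : ℕ) : ZMod (pi ^ ni)) ∣ a.1 - x ∧
      ((pj ^ β : ℕ) : ZMod (pj ^ 2)) ∣ a.2.1 - y ∧ ((pk ^ γ : ℕ) : ZMod (pk ^ 2)) ∣ a.2.2 - z)) :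
    W x y z - W (x + s) y z - W x (y + u) z - W x y (z + t) + W (x + s) (y + u) z
      + W (x + s) y (z + t) + W x (y + u) (z + t) - W (x + s) (y + u) (z + t) = 0 := by
  have := alt3 A _ hA (e.symm (s, 0, 0)) (e.symm (0, u, 0)) (e.symm (0, 0, t)) (by
    intro p hp hd
    rcases hcond hpi hpj hpk hij hik hjk e hs hu ht p hp hd with g | g | g
    · exact Or.inl g.2
    · exact Or.inr (Or.inl g.2)
    · exact Or.inr (Or.inr g.2)) (e.symm (x, y, z) + c)
  simp only [sh, add_zero] at this
  simp only [hW, cntN hpi hpj hpk hij hik hjk]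
  exact this

lemma G2 (A : Finset (ZMod M)) (c : ZMod M) {α γ : ℕ}
    (hA : cycDvd M (pi ^ α * pj ^ 0 * pk ^ γ) A)
    {s : ZMod (pi ^ ni)} {t : ZMod (pk ^ 2)}
    (hs : α ≠ 0 → ((pi ^ (α - 1) : ℕ) : ZMod (pi ^ ni)) ∣ s)
    (ht : γ ≠ 0 → ((pk ^ (γ - 1) : ℕ) : ZMod (pk ^ 2)) ∣ t) (x z)
    (W : ZMod (pi ^ ni) → ZMod (pk ^ 2) → ℤ)
    (hW : ∀ x z, W x z = cnt (img e A c) (fun a => ((pi ^ α : ℕ) : ZMod (pi ^ ni)) ∣ a.1 - x ∧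
      ((pk ^ γ : ℕ) : ZMod (pk ^ 2)) ∣ a.2.2 - z)) :
    W x z - W (x + s) z - W x (z + t) + W (x + s) (z + t) = 0 := by
  have := alt2 A _ hA (e.symm (s, 0, 0)) (e.symm (0, 0, t)) (by
    intro p hp hd
    rcases hcond hpi hpj hpk hij hik hjk e hs (u := 0) (by simp) ht p hp hd with g | g | g
    · exact Or.inl g.2
    · exact absurd rfl g.1
    · exact Or.inr g.2) (e.symm (x, 0, z) + c)
  simp only [sh, add_zero] at this
  simp only [← cntN hpi hpj hpk hij hik hjk] at this
  simp only [pow_zero, Nat.cast_one, one_dvd, true_and] at this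
  simp only [hW]
  exact this

lemma G1 (A : Finset (ZMod M)) (c : ZMod M) {α : ℕ}
    (hA : cycDvd M (pi ^ α * pj ^ 0 * pk ^ 0) A) {s : ZMod (pi ^ ni)}
    (hs : α ≠ 0 → ((pi ^ (α - 1) : ℕ) : ZMod (pi ^ ni)) ∣ s) (x)
    (W : ZMod (pi ^ ni) → ℤ)
    (hW : ∀ x, W x = cnt (img e A c) (fun a => ((pi ^ α : ℕ) : ZMod (pi ^ ni)) ∣ a.1 - x)) :
    W x = W (x + s) := by
  have := alt1 A _ hA (e.symm (s, 0, 0)) (by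
    intro p hp hd
    rcases hcond hpi hpj hpk hij hik hjk e hs (u := 0) (t := 0) (by simp) (by simp) p hp hd
      with g | g | g
    · exact g.2
    · exact absurd rfl g.1
    · exact absurd rfl g.1) (e.symm (x, 0, 0) + c)
  simp only [sh, add_zero] at this
  simp only [← cntN hpi hpj hpk hij hik hjk] at this
  simp only [pow_zero, Nat.cast_one, one_dvd, and_true] at this
  simp only [hW]
  linarith

end G
end Trans
end S18

namespace S18
section Fin
variable {pi pj pk ni M : ℕ}

lemma self0 {p n : ℕ} (x : ZMod (p ^ n)) : ((p ^ n : ℕ) : ZMod (p ^ n)) ∣ x ↔ x = 0 := by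
  rw [ZMod.natCast_self, zero_dvd_iff]

lemma self0' {p n : ℕ} (x y : ZMod (p ^ n)) :
    ((p ^ n : ℕ) : ZMod (p ^ n)) ∣ x - y ↔ x = y := by
  rw [self0, sub_eq_zero]

lemma buildSands (hpi : pi.Prime) (hpj : pj.Prime) (hpk : pk.Prime) (hni : 1 ≤ ni) [NeZero M]
    (e : ZMod M ≃+* ZMod (pi ^ ni) × ZMod (pj ^ 2) × ZMod (pk ^ 2)) {A B : Finset (ZMod M)}
    (ht : IsTiling M (A : Set (ZMod M)) (B : Set (ZMod M))) (a : ZMod M)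
    {x y z x' y' z' u v w u' v' w'} (h1 : (x, y, z) ∈ img e A a) (h2 : (x', y', z') ∈ img e A a)
    (h3 : (u, v, w) ∈ img e B 0) (h4 : (u', v', w') ∈ img e B 0)
    (T1 : tyI (FF pi ni (ni - 1)) (x - x') (u - u')) (T2 : tyJ (FF pj 2 1) (y - y') (v - v'))
    (T3 : tyJ (FF pk 2 1) (z - z') (w - w')) : u = u' ∧ v = v' ∧ w = w' := by
  rw [mem_img] at h1 h2 h3 h4
  obtain ⟨r1, e1⟩ := unit_tyI hpi hni T1
  obtain ⟨r2, e2⟩ := unit_tyJ hpj T2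
  obtain ⟨r3, e3⟩ := unit_tyJ hpk T3
  have hu : IsUnit (e.symm ((r1 : ZMod (pi ^ ni)), (r2 : ZMod (pj ^ 2)), (r3 : ZMod (pk ^ 2)))) := by
    apply IsUnit.map
    exact Prod.isUnit_iff.2 ⟨r1.isUnit, Prod.isUnit_iff.2 ⟨r2.isUnit, r3.isUnit⟩⟩
  obtain ⟨r, hr⟩ := hu
  have := sandsZ ht r h1 h2 h3 h4 (by
    rw [hr, add_sub_add_left_eq_sub, add_sub_add_left_eq_sub, ← map_sub, ← map_sub, ← map_mul]
    congr 1
    exact Prod.ext e1 (Prod.ext e2 e3))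
  rw [zero_add, zero_add] at this
  have := e.symm.injective this
  simpa using this

lemma buildCover (e : ZMod M ≃+* ZMod (pi ^ ni) × ZMod (pj ^ 2) × ZMod (pk ^ 2))
    {A B : Finset (ZMod M)}
    (ht : IsTiling M (A : Set (ZMod M)) (B : Set (ZMod M))) (a : ZMod M) (x y z) :
    ∃ x1 y1 z1 x2 y2 z2, (x1, y1, z1) ∈ img e A a ∧ (x2, y2, z2) ∈ img e B 0 ∧
    x1 + x2 = x ∧ y1 + y2 = y ∧ z1 + z2 = z := by
  obtain ⟨⟨c, d⟩, ⟨hc, hd, hs⟩, -⟩ := ht (a + e.symm (x, y, z))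
  simp only [Finset.mem_coe] at hc hd hs
  have hh : e (c - a) + e d = (x, y, z) := by
    rw [← map_add]
    apply e.symm.injective
    rw [RingEquiv.symm_apply_apply]
    linear_combination hs
  refine ⟨(e (c - a)).1, (e (c - a)).2.1, (e (c - a)).2.2, (e d).1, (e d).2.1, (e d).2.2,
    ?_, ?_, ?_, ?_, ?_⟩
  · rw [mem_img]
    change a + e.symm (e (c - a)) ∈ A
    rw [RingEquiv.symm_apply_apply, add_sub_cancel]
    exact hc
  · rw [mem_img]
    simpa using hd
  · exact congrArg Prod.fst hh
  · exact congrArg (fun q => q.2.1) hh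
  · exact congrArg (fun q => q.2.2) hh

lemma buildA {q q' N : ℕ} [NeZero M] (hq : q.Prime) (hq' : q'.Prime) (hne : q ≠ q')
    (hM : M = N * q * q')
    (A : Finset (ZMod M)) {a : ZMod M} (ha : a ∈ A)
    (hf : Fibered M q ((A : Set (ZMod M)) ∩ gridSet M a (M / (q * q'))))
    (hno : ∀ a' ∈ A, Nat.gcd (a' - a).val M ≠ M / (q * q')) {y z : ZMod M}
    (hy : ((N * q' : ℕ) : ZMod M) ∣ y) (hz : ((N * q : ℕ) : ZMod M) ∣ z) :
    a + (y + z) ∈ A ↔ z = 0 := by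
  have : M / (q * q') = N := by
    apply Nat.div_eq_of_eq_mul_left (Nat.mul_pos hq.pos hq'.pos); rw [hM]; ring
  rw [this] at hf hno
  exact corner hq hq' hne hM A ha hf hno hy hz

end Fin
end S18

/-- **Case (C3): passing the cyclotomic divisor to the other direction.** -/
theorem statement18
    (pi pj pk : ℕ) (hpi : pi.Prime) (hpj : pj.Prime) (hpk : pk.Prime)
    (hij : pi ≠ pj) (hik : pi ≠ pk) (hjk : pj ≠ pk)
    (ni : ℕ) (hni : 2 ≤ ni) (hkj : pk < pj)
    (M : ℕ) (hM : M = pi ^ ni * pj ^ 2 * pk ^ 2)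
    (A B : Finset (ZMod M))
    (htile : IsTiling M (A : Set (ZMod M)) (B : Set (ZMod M)))
    (hcardA : A.card = pi * pj * pk)
    (hPhiM : cycDvd M M A)
    (x0 : ZMod M) (D : ℕ) (hD : D = pi ^ (ni - 1) * pj * pk)
    (a ai : ZMod M) (ha : a ∈ A) (hai : ai ∈ A)
    (haL : a ∈ gridSet M x0 D) (haiL : ai ∈ gridSet M x0 D)
    (hgcd : Nat.gcd (a - ai).val M = M / pi)
    (hfja : Fibered M pj ((A : Set (ZMod M)) ∩ gridSet M a (M / (pj * pk))))
    (hnfka : ¬ Fibered M pk ((A : Set (ZMod M)) ∩ gridSet M a (M / (pj * pk))))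
    (hfkai : Fibered M pk ((A : Set (ZMod M)) ∩ gridSet M ai (M / (pj * pk))))
    (hnfjai : ¬ Fibered M pj ((A : Set (ZMod M)) ∩ gridSet M ai (M / (pj * pk))))
    (hBj : cycDvd M (M / pj) B)
    (hno : ∀ a' ∈ A, Nat.gcd (a' - a).val M ≠ M / (pj * pk) ∧
      Nat.gcd (a' - ai).val M ≠ M / (pj * pk)) :
    cycDvd M (M / pk) B := by
  have hM0 : M ≠ 0 := by
    rw [hM]
    have := hpi.ne_zero
    have := hpj.ne_zero
    have := hpk.ne_zero
    positivity
  have : NeZero M := ⟨hM0⟩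
  have : NeZero (pi ^ ni) := ⟨pow_ne_zero _ hpi.ne_zero⟩
  have : NeZero (pj ^ 2) := ⟨pow_ne_zero _ hpj.ne_zero⟩
  have : NeZero (pk ^ 2) := ⟨pow_ne_zero _ hpk.ne_zero⟩
  have hni1 : 1 ≤ ni := by omega
  obtain ⟨e⟩ := S18.exEquiv hpi hpj hpk hij hik hjk hM
  by_contra hnB
  have hpini : pi ^ ni = pi ^ (ni - 1) * pi := by
    rw [← pow_succ]; congr 1; omega
  -- the quotients of `M`
  have eMi : M / pi = pi ^ (ni - 1) * pj ^ 2 * pk ^ 2 := by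
    apply Nat.div_eq_of_eq_mul_left hpi.pos; rw [hM, hpini]; ring
  have eMj : M / pj = pi ^ ni * pj ^ 1 * pk ^ 2 := by
    apply Nat.div_eq_of_eq_mul_left hpj.pos; rw [hM]; ring
  have eMk : M / pk = pi ^ ni * pj ^ 2 * pk ^ 1 := by
    apply Nat.div_eq_of_eq_mul_left hpk.pos; rw [hM]; ring
  have dv : ∀ β γ : ℕ, β ≤ 2 → γ ≤ 2 → pi ^ ni * pj ^ β * pk ^ γ ∣ M := by
    intro β γ h1 h2
    rw [hM]
    exact mul_dvd_mul (mul_dvd_mul dvd_rfl (pow_dvd_pow _ h1)) (pow_dvd_pow _ h2)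
  have n1 : ∀ β γ : ℕ, pi ^ ni * pj ^ β * pk ^ γ ≠ 1 := by
    intro β γ h1
    have : pi ^ ni = 1 := Nat.eq_one_of_mul_eq_one_right (Nat.eq_one_of_mul_eq_one_right h1)
    exact (Nat.one_lt_pow (by omega) hpi.one_lt).ne' this
  have or5 := fun β γ h1 h2 => S18.cyc_or htile (dv β γ h1 h2) (n1 β γ)
  -- the element `ai`
  obtain ⟨⟨s0, j0, k0⟩, hs0⟩ : ∃ q, q = e (ai - a) := ⟨_, rfl⟩
  have hdiv : ((pi ^ (ni - 1) * pj ^ 2 * pk ^ 2 : ℕ) : ZMod M) ∣ ai - a := by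
    rw [← eMi, ← neg_sub, dvd_neg, S18.natdvd ⟨pi, by
      rw [Nat.div_mul_cancel]; rw [hM, hpini]; exact ⟨pi ^ (ni - 1) * pj ^ 2 * pk ^ 2, by ring⟩⟩,
      ← hgcd]
    exact Nat.gcd_dvd_left _ _
  rw [S18.dvd_iff hpi hpj hpk hij hik hjk e, ← hs0, S18.self0, S18.self0] at hdiv
  obtain ⟨hs0F, rfl, rfl⟩ : _ ∧ j0 = 0 ∧ k0 = 0 := hdiv
  have hs0F : s0 ∈ S18.FF pi ni (ni - 1) := S18.mem_FF.2 hs0F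
  have hs0' : e.symm (s0, 0, 0) = ai - a := by rw [hs0, RingEquiv.symm_apply_apply]
  have hs0n : s0 ≠ 0 := by
    rintro rfl
    have h0 : ai - a = 0 := by
      rw [← hs0']; exact map_zero e.symm
    rw [← neg_sub, h0, neg_zero, ZMod.val_zero, Nat.gcd_zero_left] at hgcd
    exact (Nat.div_lt_self (Nat.pos_of_ne_zero hM0) hpi.one_lt).ne' hgcd

  have hMN : M = pi ^ ni * pj * pk * pj * pk := by rw [hM]; ring
  have hMN' : M = pi ^ ni * pj * pk * pk * pj := by rw [hM]; ring
  have hyF : ∀ y ∈ S18.FF pj 2 1, ((pi ^ ni * pj * pk * pk : ℕ) : ZMod M) ∣ e.symm (0, y, 0) := by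
    intro y hy
    have : pi ^ ni * pj * pk * pk = pi ^ ni * pj ^ 1 * pk ^ 2 := by ring
    rw [this, S18.dvd_iff hpi hpj hpk hij hik hjk e, RingEquiv.apply_symm_apply]
    exact ⟨dvd_zero _, S18.mem_FF.1 hy, dvd_zero _⟩
  have hzF : ∀ z ∈ S18.FF pk 2 1, ((pi ^ ni * pj * pk * pj : ℕ) : ZMod M) ∣ e.symm (0, 0, z) := by
    intro z hz
    have : pi ^ ni * pj * pk * pj = pi ^ ni * pj ^ 2 * pk ^ 1 := by ring
    rw [this, S18.dvd_iff hpi hpj hpk hij hik hjk e, RingEquiv.apply_symm_apply]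
    exact ⟨dvd_zero _, dvd_zero _, S18.mem_FF.1 hz⟩
  have hA0 : ∀ y ∈ S18.FF pj 2 1, ∀ z ∈ S18.FF pk 2 1, ((0, y, z) ∈ S18.img e A a ↔ z = 0) := by
    intro y hy z hz
    rw [S18.mem_img]
    have e1 : e.symm (0, y, z) = e.symm (0, y, 0) + e.symm (0, 0, z) := by
      rw [← map_add]; simp
    rw [e1, S18.buildA hpj hpk hjk hMN A ha hfja (fun a' h' => (hno a' h').1) (hyF y hy) (hzF z hz),
      map_eq_zero_iff e.symm e.symm.injective]
    simp
  have hA1 : ∀ y ∈ S18.FF pj 2 1, ∀ z ∈ S18.FF pk 2 1, ((s0, y, z) ∈ S18.img e A a ↔ y = 0) := by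
    intro y hy z hz
    rw [S18.mem_img]
    have e1 : a + e.symm (s0, y, z) = ai + (e.symm (0, 0, z) + e.symm (0, y, 0)) := by
      have : e.symm (s0, y, z) = e.symm (s0, 0, 0) + (e.symm (0, 0, z) + e.symm (0, y, 0)) := by
        rw [← map_add, ← map_add]; simp
      rw [this, hs0']; ring
    rw [mul_comm pj pk] at hfkai hno
    rw [e1, S18.buildA hpk hpj hjk.symm hMN' A hai hfkai (fun a' h' => (hno a' h').2) (hzF z hz)
      (hyF y hy), map_eq_zero_iff e.symm e.symm.injective]
    simp
  have hAk : cycDvd M (pi ^ ni * pj ^ 2 * pk ^ 1) A := by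
    rcases or5 2 1 le_rfl (by norm_num) with h | h
    · exact h
    · rw [eMk] at hnB; exact absurd h hnB
  rw [eMj] at hBj
  have tr : ∀ t : ZMod (pk ^ 2), ((pk ^ (1 - 1) : ℕ) : ZMod (pk ^ 2)) ∣ t := by
    intro t; simp
  have trj : ∀ t : ZMod (pj ^ 2), ((pj ^ (1 - 1) : ℕ) : ZMod (pj ^ 2)) ∣ t := by
    intro t; simp
  have D3 : ∀ (S : Finset (ZMod M)) (c : ZMod M), cycDvd M (pi ^ ni * pj ^ 0 * pk ^ 2) S →
      ∀ x z, ∀ s ∈ S18.FF pi ni (ni - 1), ∀ t ∈ S18.FF pk 2 1,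
      S18.cnt (S18.img e S c) (fun a => a.1 = x ∧ a.2.2 = z)
        - S18.cnt (S18.img e S c) (fun a => a.1 = x + s ∧ a.2.2 = z)
        - S18.cnt (S18.img e S c) (fun a => a.1 = x ∧ a.2.2 = z + t)
        + S18.cnt (S18.img e S c) (fun a => a.1 = x + s ∧ a.2.2 = z + t) = 0 := by
    intro S c hS x z s hs t ht
    exact S18.G2 hpi hpj hpk hij hik hjk e S c hS (fun _ => S18.mem_FF.1 hs)
      (fun _ => S18.mem_FF.1 ht) x z
      (fun x z => S18.cnt (S18.img e S c) (fun a => a.1 = x ∧ a.2.2 = z))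
      (by intro x z; simp only [S18.self0'])
  have D4 : ∀ (S : Finset (ZMod M)) (c : ZMod M), cycDvd M (pi ^ ni * pj ^ 0 * pk ^ 1) S →
      ∀ x z, ∀ s ∈ S18.FF pi ni (ni - 1), ∀ t,
      S18.cnt (S18.img e S c) (fun a => a.1 = x ∧ a.2.2 - z ∈ S18.FF pk 2 1)
        - S18.cnt (S18.img e S c) (fun a => a.1 = x + s ∧ a.2.2 - z ∈ S18.FF pk 2 1)
        - S18.cnt (S18.img e S c) (fun a => a.1 = x ∧ a.2.2 - (z + t) ∈ S18.FF pk 2 1)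
        + S18.cnt (S18.img e S c) (fun a => a.1 = x + s ∧ a.2.2 - (z + t) ∈ S18.FF pk 2 1) = 0 := by
    intro S c hS x z s hs t
    exact S18.G2 hpi hpj hpk hij hik hjk e S c hS (fun _ => S18.mem_FF.1 hs)
      (fun _ => tr t) x z
      (fun x z => S18.cnt (S18.img e S c) (fun a => a.1 = x ∧ a.2.2 - z ∈ S18.FF pk 2 1))
      (by intro x z; simp only [S18.self0', S18.mem_FF])
  have D5 : ∀ (S : Finset (ZMod M)) (c : ZMod M), cycDvd M (pi ^ ni * pj ^ 0 * pk ^ 0) S →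
      ∀ x, ∀ s ∈ S18.FF pi ni (ni - 1), S18.cnt (S18.img e S c) (fun a => a.1 = x)
        = S18.cnt (S18.img e S c) (fun a => a.1 = x + s) := by
    intro S c hS x s hs
    exact S18.G1 hpi hpj hpk hij hik hjk e S c hS (fun _ => S18.mem_FF.1 hs) x
      (fun x => S18.cnt (S18.img e S c) (fun a => a.1 = x))
      (by intro x; simp only [S18.self0'])
  have hset : S18.Setup (S18.FF pi ni (ni - 1)) (S18.FF pj 2 1) (S18.FF pk 2 1)
      (S18.img e A a) (S18.img e B 0) s0 pi pj pk :=
    { hpk := hpk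
      hpj := hpj
      hkj := hkj
      hpi := hpi.two_le
      hik := hik
      cFi := S18.card_FF hpi hni1
      cFj := S18.card_FF hpj (n := 2) (by norm_num)
      cFk := S18.card_FF hpk (n := 2) (by norm_num)
      cJ := ZMod.card _
      cK := ZMod.card _
      cA := by unfold S18.img; rw [Finset.card_map, hcardA]
      neB := by
        obtain ⟨_, _, _, x, y, z, _, h, _⟩ := S18.buildCover e htile a 0 0 0
        exact ⟨_, h⟩
      s0F := hs0F
      s0n := hs0n
      A0 := hA0
      A1 := hA1
      cover := S18.buildCover e htile a
      sands := fun h1 h2 h3 h4 T1 T2 T3 =>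
        S18.buildSands hpi hpj hpk hni1 e htile a h1 h2 h3 h4 T1 T2 T3
      C1 := by
        intro x y z s hs u hu t W hW
        exact S18.G3 hpi hpj hpk hij hik hjk e A a hAk (fun _ => S18.mem_FF.1 hs)
          (fun _ => S18.mem_FF.1 hu) (fun _ => tr t) x y z W (by
            intro x y z; rw [hW]; simp only [S18.self0', S18.mem_FF])
      C2 := by
        intro x y z s hs u t ht W hW
        exact S18.G3 hpi hpj hpk hij hik hjk e B 0 hBj (fun _ => S18.mem_FF.1 hs)
          (fun _ => trj u) (fun _ => S18.mem_FF.1 ht) x y z W (by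
            intro x y z; rw [hW]; simp only [S18.self0', S18.mem_FF])
      C3 := (or5 0 2 (by norm_num) le_rfl).imp (D3 A a) (D3 B 0)
      C4 := (or5 0 1 (by norm_num) (by norm_num)).imp (D4 A a) (D4 B 0)
      C5 := (or5 0 0 (by norm_num) (by norm_num)).imp (D5 A a) (D5 B 0) }
  exact hset.contra
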